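/- arXiv:2505.19072 — 2 statements merged into one kernel-verified Lean document; each statement's English description precedes it below -/
import Mathlib

section
/- Partitions are identified with their Young diagrams (English convention); for partitions $\mu\subseteq\lambda$ the skew shape $\lambda/\mu$ is the set of boxes of $\lambda$ not in $\mu$. For nonempty finite sets $A,B$ of positive integers write $A\le B$ if $\max A\le\min B$. Let $\mathrm{SVRPP}^n(\lambda/\mu)$ be the set of fillings of the boxes of $\lambda/\mu$ by nonempty subsets of $\{1,\dots,n\}$ that weakly increase (in the sense of $\le$) from left to right along each row and from top to bottom down each column. Let $1\le i\le n-1$ and $T\in\mathrm{SVRPP}^n(\lambda/\mu)$. Let $T^{(i)}$ be the filling obtained by intersecting each entry of $T$ with $\{i,i+1\}$ and discarding the boxes whose intersection is empty. A nonempty column of a filling by nonempty subsets of $\{i,i+1\}$ is called $i$-pure if all its entries are $\{i\}$, $(i+1)$-pure if all its entries are $\{i+1\}$, and mixed otherwise. The $i$-signature of $T$ is the word obtained by writing, from left to right, $+$ for each $i$-pure and $-$ for each $(i+1)$-pure column of $T^{(i)}$. Successively cancelling pairs in which a $-$ immediately precedes a $+$ among the uncancelled symbols yields the reduced $i$-signature,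 which has the form $+\cdots+-\cdots-$; each of its signs corresponds to a column of $T^{(i)}$. A descent of a filling $S$ by nonempty subsets of $\{i,i+1\}$ is a column index $k$ such that, for some row $r$, $\max S(r,k)=i+1$ and $\min S(r,k+1)=i$. A descent $k$ is resolved as follows. (M1) If column $k$ is mixed and column $k+1$ is $i$-pure, let $t$ be the topmost row with $i+1\in S(t,k)$ and $E=S(t,k)$. All entries of column $k$ become $\{i\}$; the entries of column $k+1$ become $\{i\}$ above row $t$, $E$ in row $t$, and $\{i+1\}$ below row $t$. (2M) If column $k$ is $(i+1)$-pure and column $k+1$ is mixed, let $t$ be the bottommost row with $i\in S(t,k+1)$ and $E=S(t,k+1)$. The entries of column $k$ become $\{i\}$ above row $t$, $E$ in row $t$, and $\{i+1\}$ below row $t$; all entries of column $k+1$ become $\{i+1\}$. (21) If column $k$ is $(i+1)$-pure and column $k+1$ is $i$-pure, all entries of column $k$ become $\{i\}$ and all entries of column $k+1$ become $\{i+1\}$. If the reduced $i$-signature of $T$ has no $-$, put $e_i(T)=0$. Otherwise replace every $\{i+1\}$ by $\{i\}$ in the column of $T^{(i)}$ corresponding to the leftmost $-$ of the reduced $i$-signature,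 resolve descents (in any order) until none remains, and let $e_i(T)$ be the unique element of $\mathrm{SVRPP}^n(\lambda/\mu)$ obtained from $T$ by replacing $T^{(i)}$ with the result. Similarly, if the reduced $i$-signature of $T$ has no $+$, put $f_i(T)=0$. Otherwise replace every $\{i\}$ by $\{i+1\}$ in the column corresponding to the rightmost $+$ of the reduced $i$-signature, resolve descents until none remains, and let $f_i(T)$ be the unique element of $\mathrm{SVRPP}^n(\lambda/\mu)$ obtained from $T$ by replacing $T^{(i)}$ with the result. Put $e_i(0)=f_i(0)=0$. Set $\varepsilon_i(T)=\max\{k\ge 0: e_i^k(T)\ne 0\}$ and $\varphi_i(T)=\max\{k\ge 0: f_i^k(T)\ne 0\}$. Then (the operators being well defined) $\varepsilon_i(T)$ equals the number of $-$ signs in the reduced $i$-signature of $T$, and $\varphi_i(T)$ equals the number of $+$ signs in the reduced $i$-signature of $T$. -/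
namespace SetValuedRPP

/-- A filling of boxes `(r, c)` (row `r`, column `c`, both counted from `0`, rows going
downwards) by finite sets; a box that does not belong to the shape carries `∅`. -/
abbrev Filling : Type := ℕ → ℕ → Finset ℕ

/-- The box in row `r` and column `c` lies in the skew shape `lam/mu`. -/
def InSkew (lam mu : YoungDiagram) (r c : ℕ) : Prop :=
  (r, c) ∈ lam ∧ (r, c) ∉ mu

/-- `A ≤ B`; for nonempty sets this is `max A ≤ min B`. -/
def SetLE (A B : Finset ℕ) : Prop :=
  ∀ a ∈ A, ∀ b ∈ B, a ≤ b

/-- Set-valued reverse plane partitions of shape `lam/mu` with entries in `{1, …, n}`. -/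
@[ext]
structure SVRPP (n : ℕ) (lam mu : YoungDiagram) where
  entry : Filling
  eq_empty : ∀ r c, ¬ InSkew lam mu r c → entry r c = ∅
  nonempty : ∀ r c, InSkew lam mu r c → (entry r c).Nonempty
  subset : ∀ r c, entry r c ⊆ Finset.Icc 1 n
  row_le : ∀ r c, InSkew lam mu r c → InSkew lam mu r (c + 1) →
    SetLE (entry r c) (entry r (c + 1))
  col_le : ∀ r c, InSkew lam mu r c → InSkew lam mu (r + 1) c →
    SetLE (entry r c) (entry (r + 1) c)

/-! ### Fillings by nonempty subsets of two letters `a`, `a + 1` -/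

/-- Column `c` of `S` contains the letter `x`. -/
def ColHas (S : Filling) (c x : ℕ) : Prop := ∃ r, x ∈ S r c

/-- Column `c` is nonempty and all its boxes contain `{a}`. -/
def PureLow (a : ℕ) (S : Filling) (c : ℕ) : Prop :=
  ColHas S c a ∧ ¬ ColHas S c (a + 1)

/-- Column `c` is nonempty and all its boxes contain `{a + 1}`. -/
def PureHigh (a : ℕ) (S : Filling) (c : ℕ) : Prop :=
  ColHas S c (a + 1) ∧ ¬ ColHas S c a

/-- Column `c` is mixed. -/
def Mixed (a : ℕ) (S : Filling) (c : ℕ) : Prop :=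
  ColHas S c a ∧ ColHas S c (a + 1)

/-- `k` is a descent: some row has a box with maximum `a + 1` in column `k` and a box with
minimum `a` in column `k + 1`. -/
def Descent (a : ℕ) (S : Filling) (k : ℕ) : Prop :=
  ∃ r, a + 1 ∈ S r k ∧ a ∈ S r (k + 1)

/-- Every box of column `c` gets the entry `{x}`; the other columns are kept. -/
def setCol (c x : ℕ) (S : Filling) : Filling :=
  fun r j => if j = c then (S r j).image (fun _ => x) else S r j

/-- The boxes of column `c` get the entry `{a}` above row `t`, the entry `E` in row `t` and
the entry `{a + 1}` below row `t`; the other columns are kept. -/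
def mixCol (a c t : ℕ) (E : Finset ℕ) (S : Filling) : Filling :=
  fun r j =>
    if j = c then
      if S r j = ∅ then ∅
      else if r < t then {a}
      else if r = t then E
      else {a + 1}
    else S r j

/-- The topmost row in which column `c` contains the letter `a + 1`. -/
noncomputable def topHigh (a : ℕ) (S : Filling) (c : ℕ) : ℕ := sInf {r | a + 1 ∈ S r c}

/-- The bottommost row in which column `c` contains the letter `a`. -/
noncomputable def botLow (a : ℕ) (S : Filling) (c : ℕ) : ℕ := sSup {r | a ∈ S r c}

/-- One descent resolution, at a descent `k`.
* (M1): column `k` is mixed, with transition row `t` (its first row containing `a + 1`) and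
  transition entry `{a + 1}` or `{a, a + 1}`, and column `k + 1` is `a`-pure; column `k`
  becomes `a`-pure, and column `k + 1` mixed with the same transition row and entry.
* (2M): column `k` is `(a + 1)`-pure, and column `k + 1` is mixed, with transition row `t`
  (its last row containing `a`) and transition entry `{a}` or `{a, a + 1}`; column `k`
  becomes mixed with the same transition row and entry, and column `k + 1` `(a + 1)`-pure.
* (21): column `k` is `(a + 1)`-pure and column `k + 1` is `a`-pure; column `k` becomes
  `a`-pure and column `k + 1` becomes `(a + 1)`-pure. -/
inductive ResStep (a : ℕ) (S : Filling) : Filling → Prop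
  | m1 (k : ℕ) (hd : Descent a S k) (hk : Mixed a S k) (hk' : PureLow a S (k + 1)) :
      ResStep a S
        (setCol k a (mixCol a (k + 1) (topHigh a S k) (S (topHigh a S k) k) S))
  | twoM (k : ℕ) (hd : Descent a S k) (hk : PureHigh a S k) (hk' : Mixed a S (k + 1)) :
      ResStep a S
        (setCol (k + 1) (a + 1)
          (mixCol a k (botLow a S (k + 1)) (S (botLow a S (k + 1)) (k + 1)) S))
  | twoOne (k : ℕ) (hd : Descent a S k) (hk : PureHigh a S k) (hk' : PureLow a S (k + 1)) :
      ResStep a S (setCol k a (setCol (k + 1) (a + 1) S))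

/-- `N` is an outcome of the descent-resolution algorithm applied to `S`: it is reached by
resolving descents one after the other, in any order, until none remains. -/
def ResolvesTo (a : ℕ) (S N : Filling) : Prop :=
  Relation.ReflTransGen (ResStep a) S N ∧ ∀ k, ¬ Descent a N k

/-! ### Signatures -/

inductive Sign
  | plus
  | minus

/-- The restriction of a filling to the letters `i` and `i + 1`. -/
def restrictTwo (i : ℕ) (T : Filling) : Filling :=
  fun r c => (T r c).filter (fun x => x = i ∨ x = i + 1)

/-- The filling `T` with its `{i, i + 1}`-part replaced by `N`. -/
def replaceTwo (i : ℕ) (T N : Filling) : Filling :=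
  fun r c => (T r c).filter (fun x => ¬ (x = i ∨ x = i + 1)) ∪ N r c

/-- Put a letter in front of a reduced word, cancelling a `−` against a `+` that it
immediately precedes. -/
def consCancel : Sign × ℕ → List (Sign × ℕ) → List (Sign × ℕ)
  | (Sign.minus, _), (Sign.plus, _) :: w => w
  | x, w => x :: w

/-- Successively cancel all pairs in which a `−` immediately precedes a `+`. -/
def cancelPairs (w : List (Sign × ℕ)) : List (Sign × ℕ) := w.foldr consCancel []

noncomputable section

open scoped Classical

variable {n : ℕ} {lam mu : YoungDiagram}

/-- The `i`-signature of `T`, read from left to right; each sign is recorded together with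
the column that carries it. (All columns of `lam/mu` have an index below the length of the
first row of `lam`.) -/
def signature (i : ℕ) (T : SVRPP n lam mu) : List (Sign × ℕ) :=
  (List.range (lam.rowLen 0)).filterMap fun c =>
    if PureLow i (restrictTwo i T.entry) c then some (Sign.plus, c)
    else if PureHigh i (restrictTwo i T.entry) c then some (Sign.minus, c)
    else none

/-- The reduced `i`-signature of `T`. -/
def reducedSignature (i : ℕ) (T : SVRPP n lam mu) : List (Sign × ℕ) :=
  cancelPairs (signature i T)

/-- The columns carrying the `−` signs of the reduced `i`-signature, from left to right. -/
def minusCols (i : ℕ) (T : SVRPP n lam mu) : List ℕ :=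
  (reducedSignature i T).filterMap fun
    | (Sign.minus, c) => some c
    | (Sign.plus, _) => none

/-- The columns carrying the `+` signs of the reduced `i`-signature, from left to right. -/
def plusCols (i : ℕ) (T : SVRPP n lam mu) : List ℕ :=
  (reducedSignature i T).filterMap fun
    | (Sign.plus, c) => some c
    | (Sign.minus, _) => none

/-! ### Crystal operators; `none` plays the role of `0` -/

/-- The unique set-valued reverse plane partition obtained from `T` by replacing its
`{i, i + 1}`-part by an outcome of the descent-resolution algorithm applied to `S`. (If there
were no such object, or several, the value would be `none`; that this never happens for the
fillings `S` used below is not assumed anywhere.) -/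
def resolve (i : ℕ) (T : SVRPP n lam mu) (S : Filling) : Option (SVRPP n lam mu) :=
  if h : ∃! T' : SVRPP n lam mu,
      ∃ N, ResolvesTo i S N ∧ T'.entry = replaceTwo i T.entry N
  then some h.choose else none

/-- The operator `e_i`: it is `0` if the reduced `i`-signature has no `−`; otherwise every
`{i + 1}` in the column of the leftmost uncancelled `−` becomes `{i}`, and the descents are
resolved. -/
def e (i : ℕ) (T : SVRPP n lam mu) : Option (SVRPP n lam mu) :=
  (minusCols i T).head?.bind fun A => resolve i T (setCol A i (restrictTwo i T.entry))

/-- The operator `f_i`: it is `0` if the reduced `i`-signature has no `+`; otherwise every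
`{i}` in the column of the rightmost uncancelled `+` becomes `{i + 1}`, and the descents are
resolved. -/
def f (i : ℕ) (T : SVRPP n lam mu) : Option (SVRPP n lam mu) :=
  (plusCols i T).getLast?.bind fun A => resolve i T (setCol A (i + 1) (restrictTwo i T.entry))

/-- The power `e_i^k(T)`, with `e_i(0) = 0`. -/
def ePow (i k : ℕ) (T : SVRPP n lam mu) : Option (SVRPP n lam mu) :=
  (fun o => o.bind (e i))^[k] (some T)

/-- The power `f_i^k(T)`, with `f_i(0) = 0`. -/
def fPow (i k : ℕ) (T : SVRPP n lam mu) : Option (SVRPP n lam mu) :=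
  (fun o => o.bind (f i))^[k] (some T)

end

end SetValuedRPP

/-!
Half a turn of a filling, together with the exchange of the letters `a` and `a + 1`, exchanges the
rules (M1) and (2M) and the operators `e` and `f`. Both operators are therefore treated at once,
with a sign giving the direction.

Once the letter of the selected column is changed, the only possible descent is between this pure
column and the column ahead of it. If the latter is mixed, (M1) or (2M) exchanges the profiles of
the two columns, and then a descent is only possible one column further ahead. As mixed columns
carry no sign, the word of signs does not change. Rule (21) would apply if the column ahead were
pure of the opposite sign. But the selected sign is the one next to the boundary in the reduced
signature, so every column ahead of opposite sign is cancelled by one lying in between, and there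
the motion stops. Hence resolution is deterministic, and its effect on the word of signs is to flip
the selected sign: `e` turns the first `−` of the reduced signature into its last `+`, and `f` does
the reverse.
-/

namespace SetValuedRPP

/-! ### Iterating a partial map -/

theorem isGreatest_iterate_bind_ne_none {X : Type*} {g : X → Option X} {len : X → ℕ}
    (eq_none : ∀ x, len x = 0 → g x = none)
    (exists_eq_some : ∀ x m, len x = m + 1 → ∃ y, g x = some y ∧ len y = m) (x : X) :
    IsGreatest {k : ℕ | (fun o : Option X => o.bind g)^[k] (some x) ≠ none} (len x) := by
  have iterate_none (k : ℕ) : (fun o : Option X => o.bind g)^[k] none = none :=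
    Function.iterate_fixed rfl k
  have iterate_ne_none_iff (k : ℕ) (x : X) :
      (fun o : Option X => o.bind g)^[k] (some x) ≠ none ↔ k ≤ len x := by
    induction k generalizing x with
    | zero => simp
    | succ k ih =>
      rw [Function.iterate_succ_apply, Option.bind_some]
      rcases hx : len x with _ | m
      · simp [eq_none x hx, iterate_none]
      · obtain ⟨y, hy, rfl⟩ := exists_eq_some x m hx
        rw [hy, ih y, Nat.succ_le_succ_iff]
  exact ⟨(iterate_ne_none_iff _ x).2 le_rfl, fun k hk => (iterate_ne_none_iff k x).1 hk⟩

/-! ### Cancellation in sign words -/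

section ReducedWords

variable {u v w w' : List (Sign × ℕ)} {x : Sign × ℕ} {P M : List ℕ} {c : ℕ}

/-- The word with a `+` in each of the columns `P`. -/
abbrev pluses (P : List ℕ) : List (Sign × ℕ) := P.map (Prod.mk Sign.plus)

/-- The word with a `−` in each of the columns `M`. -/
abbrev minuses (M : List ℕ) : List (Sign × ℕ) := M.map (Prod.mk Sign.minus)

theorem cancelPairs_cons (x : Sign × ℕ) (w : List (Sign × ℕ)) :
    cancelPairs (x :: w) = consCancel x (cancelPairs w) := rfl

theorem foldr_consCancel_consCancel (x : Sign × ℕ) (w z : List (Sign × ℕ)) :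
    (consCancel x w).foldr consCancel z = consCancel x (w.foldr consCancel z) := by
  rcases x with ⟨_ | _, _⟩ <;> rcases w with _ | ⟨⟨_ | _, _⟩, _⟩ <;> rfl

theorem cancelPairs_append (u v : List (Sign × ℕ)) :
    cancelPairs (u ++ v) = (cancelPairs u).foldr consCancel (cancelPairs v) := by
  induction u with
  | nil => rfl
  | cons x u ih =>
    rw [List.cons_append, cancelPairs_cons, ih, cancelPairs_cons, foldr_consCancel_consCancel]

theorem cancelPairs_map_snd (g : ℕ → ℕ) (w : List (Sign × ℕ)) :
    cancelPairs (w.map (Prod.map id g)) = (cancelPairs w).map (Prod.map id g) := by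
  induction w with
  | nil => rfl
  | cons x w ih =>
    rw [List.map_cons, cancelPairs_cons, ih, cancelPairs_cons]
    rcases x with ⟨_ | _, _⟩ <;> rcases cancelPairs w with _ | ⟨⟨_ | _, _⟩, _⟩ <;> rfl

theorem map_fst_cancelPairs_congr (h : w.map Prod.fst = w'.map Prod.fst) :
    (cancelPairs w).map Prod.fst = (cancelPairs w').map Prod.fst := by
  have forget_columns (v : List (Sign × ℕ)) :
      v.map (Prod.map id fun _ => 0) = (v.map Prod.fst).map (·, 0) := by
    rw [List.map_map]; rfl
  have fst_forget (v : List (Sign × ℕ)) :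
      v.map Prod.fst = (v.map (Prod.map id fun _ => 0)).map Prod.fst := by
    rw [List.map_map]; rfl
  rw [fst_forget (cancelPairs w), ← cancelPairs_map_snd, forget_columns, h, ← forget_columns,
    cancelPairs_map_snd, ← fst_forget]

theorem cancelPairs_sublist (w : List (Sign × ℕ)) : (cancelPairs w).Sublist w := by
  induction w with
  | nil => exact .slnil
  | cons x w ih =>
    refine .trans ?_ (ih.cons_cons x)
    rw [cancelPairs_cons]
    rcases x with ⟨_ | _, _⟩ <;> rcases cancelPairs w with _ | ⟨⟨_ | _, _⟩, _⟩ <;>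
      simp [consCancel]

theorem exists_cancelPairs_eq (w : List (Sign × ℕ)) :
    ∃ P M, cancelPairs w = pluses P ++ minuses M := by
  induction w with
  | nil => exact ⟨[], [], rfl⟩
  | cons x w ih =>
    obtain ⟨P, M, h⟩ := ih
    rw [cancelPairs_cons, h]
    rcases x with ⟨_ | _, c⟩
    · exact ⟨c :: P, M, rfl⟩
    · rcases P with _ | ⟨d, P⟩
      · rcases M with _ | ⟨d, M⟩
        · exact ⟨[], [c], rfl⟩
        · exact ⟨[], c :: d :: M, rfl⟩
      · exact ⟨P, M, rfl⟩

theorem exists_split_of_cancelPairs_eq (h : cancelPairs w = pluses P ++ x :: w') :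
    ∃ u v, w = u ++ x :: v ∧ cancelPairs u = pluses P ∧ cancelPairs v = w' := by
  induction w generalizing P with
  | nil => simp [cancelPairs] at h
  | cons y w ih =>
    rw [cancelPairs_cons] at h
    rcases y with ⟨_ | _, c⟩
    · rcases P with _ | ⟨d, P⟩
      · obtain ⟨rfl, rfl⟩ := List.cons.inj h
        exact ⟨[], w, rfl, rfl, rfl⟩
      · obtain ⟨hd, htail⟩ := List.cons.inj h
        obtain ⟨u, v, rfl, hu, hv⟩ := ih htail
        exact ⟨(Sign.plus, c) :: u, v, rfl, by rw [cancelPairs_cons, hu, hd]; rfl, hv⟩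
    · rcases hw : cancelPairs w with _ | ⟨⟨_ | _, d⟩, z⟩
      · rw [hw] at h
        rcases P with _ | ⟨d, P⟩
        · obtain ⟨rfl, rfl⟩ := List.cons.inj h
          exact ⟨[], w, rfl, rfl, hw⟩
        · simp [consCancel] at h
      · rw [hw] at h
        obtain ⟨u, v, rfl, hu, hv⟩ := ih (P := d :: P) (by rw [hw]; exact congrArg _ h)
        exact ⟨(Sign.minus, c) :: u, v, rfl, by rw [cancelPairs_cons, hu]; rfl, hv⟩
      · rw [hw] at h
        rcases P with _ | ⟨d, P⟩
        · obtain ⟨rfl, rfl⟩ := List.cons.inj h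
          exact ⟨[], w, rfl, rfl, hw⟩
        · simp [consCancel] at h

theorem foldr_consCancel_pluses (P : List ℕ) (w : List (Sign × ℕ)) :
    (pluses P).foldr consCancel w = pluses P ++ w := by
  induction P with
  | nil => rfl
  | cons c P ih => exact congrArg (consCancel (Sign.plus, c)) ih

theorem cancelPairs_append_cons (hu : cancelPairs u = pluses P) (hv : cancelPairs v = minuses M)
    (x : Sign × ℕ) : cancelPairs (u ++ x :: v) = pluses P ++ x :: minuses M := by
  have consCancel_minuses : consCancel x (minuses M) = x :: minuses M := by
    rcases x with ⟨_ | _, _⟩ <;> rcases M with _ | ⟨_, _⟩ <;> rfl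
  rw [cancelPairs_append, cancelPairs_cons, hu, hv, consCancel_minuses, foldr_consCancel_pluses]

theorem exists_cancelPairs_eq_pluses_of_cons (h : cancelPairs (x :: w) = pluses P) :
    ∃ P', cancelPairs w = pluses P' := by
  rw [cancelPairs_cons] at h
  rcases x with ⟨_ | _, c⟩
  · rcases P with _ | ⟨d, P⟩
    · simp [consCancel] at h
    · exact ⟨P, (List.cons.inj h).2⟩
  · rcases hw : cancelPairs w with _ | ⟨⟨_ | _, d⟩, z⟩ <;> rw [hw] at h
    · exact ⟨[], rfl⟩
    · exact ⟨d :: P, congrArg _ h⟩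
    · cases P <;> simp [consCancel] at h

theorem exists_plus_mem_of_cancelPairs_eq_pluses
    (h : cancelPairs (u ++ (Sign.minus, c) :: v) = pluses P) : ∃ b, (Sign.plus, b) ∈ v := by
  induction u generalizing P with
  | nil =>
    rw [List.nil_append, cancelPairs_cons] at h
    rcases hv : cancelPairs v with _ | ⟨⟨_ | _, b⟩, z⟩ <;> rw [hv] at h
    · cases P <;> simp [consCancel] at h
    · exact ⟨b, (cancelPairs_sublist v).subset (by simp [hv])⟩
    · cases P <;> simp [consCancel] at h
  | cons x u ih =>
    obtain ⟨P', hP'⟩ := exists_cancelPairs_eq_pluses_of_cons h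
    exact ih hP'

theorem exists_minus_mem_of_cancelPairs_eq_minuses
    (h : cancelPairs (u ++ (Sign.plus, c) :: v) = minuses M) : ∃ b, (Sign.minus, b) ∈ u := by
  rcases u with _ | ⟨⟨_ | _, b⟩, u⟩
  · cases M <;> simp [cancelPairs_cons, consCancel] at h
  · cases M <;> simp [cancelPairs_cons, consCancel] at h
  · exact ⟨b, List.mem_cons_self⟩

end ReducedWords


/-! ### Directions -/

namespace Sign

/-- The opposite sign. -/
def flip : Sign → Sign
  | plus => minus
  | minus => plus

/-- The letter filling the columns that carry a given sign. -/
def letter (a : ℕ) : Sign → ℕ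
  | plus => a
  | minus => a + 1

/-- The order on row and column indices as it appears when a filling is turned upside down, so
that the roles of the two letters are exchanged: reversed for the sign `−`. -/
def Le : Sign → ℕ → ℕ → Prop
  | plus, x, y => x ≤ y
  | minus, x, y => y ≤ x

/-- The strict order associated with `Sign.Le`. -/
def Lt : Sign → ℕ → ℕ → Prop
  | plus, x, y => x < y
  | minus, x, y => y < x

/-- The smaller of the columns `k` and `k + 1` with respect to `Sign.Lt`. -/
def front : Sign → ℕ → ℕ
  | plus, k => k
  | minus, k => k + 1

/-- The larger of the columns `k` and `k + 1` with respect to `Sign.Lt`. -/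
def back : Sign → ℕ → ℕ
  | plus, k => k + 1
  | minus, k => k

@[simp]
theorem flip_flip (s : Sign) : s.flip.flip = s := by cases s <;> rfl

theorem front_lt_back (s : Sign) (k : ℕ) : s.Lt (s.front k) (s.back k) := by
  cases s <;> exact Nat.lt_succ_self k

theorem front_ne_back (s : Sign) (k : ℕ) : s.front k ≠ s.back k := by
  cases s <;> simp [front, back]

theorem front_injective (s : Sign) : Function.Injective s.front := by
  cases s <;> intro k l h <;> simpa [front] using h

theorem back_injective (s : Sign) : Function.Injective s.back := by
  cases s <;> intro k l h <;> simpa [back] using h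

variable {s : Sign} {x y z k : ℕ}

theorem Lt.ne (h : s.Lt x y) : x ≠ y := by
  cases s <;> simp only [Lt] at h <;> omega

theorem Lt.trans (h : s.Lt x y) (h' : s.Lt y z) : s.Lt x z := by
  cases s <;> simp only [Lt] at * <;> omega

instance (s : Sign) : IsStrictOrder ℕ s.Lt where
  irrefl _ h := h.ne _root_.rfl
  trans _ _ _ := Lt.trans

theorem le_iff_eq_or_lt : s.Le x y ↔ x = y ∨ s.Lt x y := by
  cases s <;> simp only [Le, Lt] <;> omega

theorem Lt.le (h : s.Lt x y) : s.Le x y := by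
  cases s <;> exact Nat.le_of_lt h

theorem Lt.not_le (h : s.Lt x y) : ¬ s.Le y x := by
  cases s <;> exact Nat.not_le_of_lt h

theorem lt_front (h : s.Lt x (s.back k)) (hne : x ≠ s.front k) : s.Lt x (s.front k) := by
  cases s <;> simp only [Lt, back, front] at * <;> omega

theorem not_lt_of_front_lt (h : s.Lt (s.front k) x) : ¬ s.Lt x (s.back k) := by
  cases s <;> simp only [Lt, back, front] at * <;> omega

theorem le_or_lt (s : Sign) (x y : ℕ) : s.Le x y ∨ s.Lt y x := by
  cases s <;> exact le_or_gt _ _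

theorem Le.rfl : s.Le x x := by cases s <;> exact le_refl x

theorem le_flip : s.flip.Le x y ↔ s.Le y x := by cases s <;> exact Iff.rfl

theorem Le.antisymm (h : s.Le x y) (h' : s.Le y x) : x = y := by
  cases s <;> simp only [Le] at * <;> omega

theorem Le.trans (h : s.Le x y) (h' : s.Le y z) : s.Le x z := by
  cases s <;> simp only [Le] at * <;> omega

end Sign


section TwoLetter

variable {a k r q c t x : ℕ} {s u : Sign} {D : Set (ℕ × ℕ)} {S : Filling}

/-! ### Two-letter fillings -/

/-- Column `c` carries the sign `s`. -/
def IsPure (a : ℕ) (s : Sign) (S : Filling) (c : ℕ) : Prop :=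
  ColHas S c (s.letter a) ∧ ¬ ColHas S c (s.flip.letter a)

/-- `S` fills the region `D` of boxes `(r, c)` by nonempty subsets of `{a, a + 1}`, weakly
increasing down the columns; descents are allowed. -/
structure IsTwoLetter (a : ℕ) (D : Set (ℕ × ℕ)) (S : Filling) : Prop where
  nonempty_iff : ∀ r c, (S r c).Nonempty ↔ (r, c) ∈ D
  letter : ∀ r c, ∀ x ∈ S r c, x = a ∨ x = a + 1
  col : ∀ r q c, r < q → a + 1 ∈ S r c → a ∉ S q c

theorem descent_iff (s : Sign) :
    Descent a S k ↔
      ∃ r, s.flip.letter a ∈ S r (s.front k) ∧ s.letter a ∈ S r (s.back k) := by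
  cases s
  · rfl
  · exact exists_congr fun _ => and_comm

theorem mixed_iff (s : Sign) :
    Mixed a S c ↔ ColHas S c (s.letter a) ∧ ColHas S c (s.flip.letter a) := by
  cases s
  · rfl
  · exact and_comm

theorem IsPure.not_flip (h : IsPure a s S c) : ¬ IsPure a s.flip S c := fun h' => h.2 h'.1

theorem Mixed.not_isPure (h : Mixed a S c) (s : Sign) : ¬ IsPure a s S c :=
  fun h' => h'.2 ((mixed_iff s).1 h).2

theorem Mixed.colHas (h : Mixed a S c) (s : Sign) : ColHas S c (s.letter a) :=
  ((mixed_iff s).1 h).1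

theorem IsPure.congr {S' : Filling} (h : ∀ r, S r c = S' r c) :
    IsPure a s S c ↔ IsPure a s S' c := by
  simp only [IsPure, ColHas, h]

theorem corners_mem (hD : D.OrdConnected) (hq : (q, s.front k) ∈ D) (hr : (r, s.back k) ∈ D)
    (h : s.Le q r) : (q, s.back k) ∈ D ∧ (r, s.front k) ∈ D := by
  cases s
  · exact ⟨hD.out hq hr ⟨⟨le_rfl, Nat.le_succ k⟩, ⟨h, le_rfl⟩⟩,
      hD.out hq hr ⟨⟨h, le_rfl⟩, ⟨le_rfl, Nat.le_succ k⟩⟩⟩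
  · exact ⟨hD.out hr hq ⟨⟨h, le_rfl⟩, ⟨le_rfl, Nat.le_succ k⟩⟩,
      hD.out hr hq ⟨⟨le_rfl, Nat.le_succ k⟩, ⟨h, le_rfl⟩⟩⟩

theorem mem_of_column_le (hD : D.OrdConnected) (hr : (r, c) ∈ D) (ht : (t, c) ∈ D)
    (hrq : u.Le r q) (hqt : u.Le q t) : (q, c) ∈ D := by
  cases u
  · exact hD.out hr ht ⟨⟨hrq, le_rfl⟩, ⟨hqt, le_rfl⟩⟩
  · exact hD.out ht hr ⟨⟨hqt, le_rfl⟩, ⟨hrq, le_rfl⟩⟩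

namespace IsTwoLetter

theorem mem_region (h : IsTwoLetter a D S) (hx : x ∈ S r c) : (r, c) ∈ D :=
  (h.nonempty_iff r c).1 ⟨x, hx⟩

theorem letter_mem_or (h : IsTwoLetter a D S) (hr : (r, c) ∈ D) (s : Sign) :
    s.letter a ∈ S r c ∨ s.flip.letter a ∈ S r c := by
  obtain ⟨x, hx⟩ := (h.nonempty_iff r c).2 hr
  rcases h.letter r c x hx with rfl | rfl <;> cases s
  exacts [.inl hx, .inr hx, .inr hx, .inl hx]

theorem le_of_letter_mem (h : IsTwoLetter a D S) (hr : s.letter a ∈ S r c)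
    (hq : s.flip.letter a ∈ S q c) : s.Le r q := by
  cases s
  · exact not_lt.1 fun hlt => h.col q r c hlt hq hr
  · exact not_lt.1 fun hlt => h.col r q c hlt hr hq

theorem letter_mem_of_le (h : IsTwoLetter a D S) (hr : (r, c) ∈ D) (hrq : s.Le r q)
    (hq : s.letter a ∈ S q c) : s.letter a ∈ S r c := by
  refine (h.letter_mem_or hr s).elim id fun hr' => ?_
  rwa [hrq.antisymm (h.le_of_letter_mem hq hr')]

theorem isPure_or_mixed (h : IsTwoLetter a D S) (hr : (r, c) ∈ D) (s : Sign) :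
    IsPure a s S c ∨ IsPure a s.flip S c ∨ Mixed a S c := by
  have := h.letter_mem_or hr s
  simp only [IsPure, mixed_iff s, Sign.flip_flip, ColHas]
  grind

end IsTwoLetter

/-! ### Resolving a descent with a mixed column -/

/-- Row `t` of the column `c` separates the letters: no `a` lies below it and no `a + 1` above. -/
def IsTransitionRow (a : ℕ) (S : Filling) (c t : ℕ) : Prop :=
  (S t c).Nonempty ∧ ∀ (u : Sign) (q : ℕ), u.letter a ∈ S q c → u.Le q t

theorem IsTwoLetter.isTransitionRow_topHigh (h : IsTwoLetter a D S) (hc : Mixed a S c) :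
    IsTransitionRow a S c (topHigh a S c) := by
  have htop : a + 1 ∈ S (topHigh a S c) c := Nat.sInf_mem (s := {r | a + 1 ∈ S r c}) hc.2
  refine ⟨⟨_, htop⟩, ?_⟩
  rintro (_ | _) q hq
  · exact h.le_of_letter_mem (s := .plus) hq htop
  · exact Nat.sInf_le hq

theorem IsTwoLetter.isTransitionRow_botLow (h : IsTwoLetter a D S) (hc : Mixed a S c) :
    IsTransitionRow a S c (botLow a S c) := by
  obtain ⟨q, hq⟩ := hc.2
  have bounded : BddAbove {r | a ∈ S r c} :=
    ⟨q, fun r hr => h.le_of_letter_mem (s := .plus) hr hq⟩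
  have hbot : a ∈ S (botLow a S c) c := Nat.sSup_mem hc.1 bounded
  refine ⟨⟨_, hbot⟩, ?_⟩
  rintro (_ | _) q hq
  · exact le_csSup bounded hq
  · exact h.le_of_letter_mem (s := .minus) hq hbot

/-- The transition row used by the rule (M1), for `+`, and (2M), for `−`. -/
noncomputable def transitionRow (a : ℕ) : Sign → Filling → ℕ → ℕ
  | .plus => topHigh a
  | .minus => botLow a

theorem IsTwoLetter.isTransitionRow (h : IsTwoLetter a D S) (s : Sign) (hc : Mixed a S c) :
    IsTransitionRow a S c (transitionRow a s S c) := by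
  cases s
  exacts [h.isTransitionRow_topHigh hc, h.isTransitionRow_botLow hc]

theorem IsTransitionRow.mem_mixCol {b : ℕ} (ht : IsTransitionRow a S c t) (h : IsTwoLetter a D S)
    (hD : D.OrdConnected) (hc : Mixed a S c) (u : Sign) :
    u.letter a ∈ mixCol a b t (S t c) S r b ↔
      (S r b).Nonempty ∧ ∃ q, u.Le r q ∧ u.letter a ∈ S q c := by
  have htD : (t, c) ∈ D := (h.nonempty_iff t c).1 ht.1
  have exists_iff : (∃ q, u.Le r q ∧ u.letter a ∈ S q c) ↔
      u.Lt r t ∨ r = t ∧ u.letter a ∈ S t c := by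
    refine ⟨fun ⟨q, hrq, hq⟩ => ?_, ?_⟩
    · rcases Sign.le_iff_eq_or_lt.1 (hrq.trans (ht.2 u q hq)) with rfl | hrt
      · exact .inr ⟨rfl, (ht.2 u q hq).antisymm hrq ▸ hq⟩
      · exact .inl hrt
    · rintro (hrt | ⟨rfl, hr⟩)
      · obtain ⟨p, hp⟩ := hc.colHas u
        rcases u.le_or_lt r p with hrp | hpr
        · exact ⟨p, hrp, hp⟩
        have hrD := mem_of_column_le hD (h.mem_region hp) htD hpr.le hrt.le
        exact ⟨r, .rfl, (h.letter_mem_or hrD u).resolve_right fun hr =>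
          hrt.not_le (Sign.le_flip.1 (ht.2 _ r hr))⟩
      · exact ⟨r, .rfl, hr⟩
  rw [exists_iff]
  cases u <;> simp only [mixCol, if_pos, Sign.Lt, Sign.letter] <;> grind

theorem mem_setCol_self {y : ℕ} : x ∈ setCol c y S r c ↔ (S r c).Nonempty ∧ x = y := by
  simp [setCol, Finset.Nonempty, eq_comm]

theorem setCol_of_ne {j y : ℕ} (hj : j ≠ c) : setCol c y S r j = S r j := if_neg hj

theorem isPure_setCol (hc : ∃ r, (S r c).Nonempty) :
    IsPure a s (setCol c (s.letter a) S) c := by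
  refine ⟨hc.imp fun r hr => mem_setCol_self.2 ⟨hr, rfl⟩, fun ⟨r, hr⟩ => ?_⟩
  have := (mem_setCol_self.1 hr).2
  cases s <;> simp [Sign.flip, Sign.letter] at this

theorem nonempty_setCol {j y : ℕ} : (setCol c y S r j).Nonempty ↔ (S r j).Nonempty := by
  unfold setCol
  split_ifs
  exacts [Finset.image_nonempty, .rfl]

theorem mixCol_of_ne {j : ℕ} {E : Finset ℕ} (hj : j ≠ c) : mixCol a c t E S r j = S r j :=
  if_neg hj

theorem nonempty_mixCol {j : ℕ} {E : Finset ℕ} (hE : E.Nonempty) :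
    (mixCol a c t E S r j).Nonempty ↔ (S r j).Nonempty := by
  unfold mixCol
  split_ifs <;> simp_all [Finset.nonempty_iff_ne_empty]

protected theorem IsTwoLetter.setCol (h : IsTwoLetter a D S) :
    IsTwoLetter a D (setCol c (s.letter a) S) where
  nonempty_iff r j := by rw [nonempty_setCol, h.nonempty_iff]
  letter r j x hx := by
    rcases eq_or_ne j c with rfl | hj
    · rw [(mem_setCol_self.1 hx).2]
      cases s
      exacts [.inl rfl, .inr rfl]
    · rw [setCol_of_ne hj] at hx
      exact h.letter r j x hx
  col r q j hrq hr hq := by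
    rcases eq_or_ne j c with rfl | hj
    · have := (mem_setCol_self.1 hr).2.trans (mem_setCol_self.1 hq).2.symm
      omega
    · rw [setCol_of_ne hj] at hr hq
      exact h.col r q j hrq hr hq

/-- The outcome of the rule (M1), for `s = +`, or (2M), for `s = −`, at the descent `k`: the column
`s.front k` is the mixed one, and it exchanges its profile with the column `s.back k`. -/
noncomputable def slide (a : ℕ) (s : Sign) (k : ℕ) (S : Filling) : Filling :=
  setCol (s.front k) (s.letter a)
    (mixCol a (s.back k) (transitionRow a s S (s.front k))
      (S (transitionRow a s S (s.front k)) (s.front k)) S)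

theorem slide_of_ne (hf : c ≠ s.front k) (hb : c ≠ s.back k) : slide a s k S r c = S r c := by
  rw [slide, setCol_of_ne hf, mixCol_of_ne hb]

theorem isPure_slide_front (hm : Mixed a S (s.front k)) :
    IsPure a s (slide a s k S) (s.front k) := by
  obtain ⟨r, hr⟩ := hm.1
  exact isPure_setCol ⟨r, by rw [mixCol_of_ne (s.front_ne_back k)]; exact ⟨_, hr⟩⟩

theorem mem_slide_front :
    x ∈ slide a s k S r (s.front k) ↔ (S r (s.front k)).Nonempty ∧ x = s.letter a := by
  rw [slide, mem_setCol_self, mixCol_of_ne (s.front_ne_back k)]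

namespace IsTwoLetter

theorem letter_mem_slide_back (h : IsTwoLetter a D S) (hD : D.OrdConnected)
    (hm : Mixed a S (s.front k)) (u : Sign) :
    u.letter a ∈ slide a s k S r (s.back k) ↔
      (r, s.back k) ∈ D ∧ ∃ q, u.Le r q ∧ u.letter a ∈ S q (s.front k) := by
  rw [slide, setCol_of_ne (s.front_ne_back k).symm, (h.isTransitionRow s hm).mem_mixCol h hD hm,
    h.nonempty_iff]

protected theorem slide (h : IsTwoLetter a D S) (hD : D.OrdConnected) (hm : Mixed a S (s.front k)) :
    IsTwoLetter a D (slide a s k S) where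
  nonempty_iff r c := by
    rw [slide, nonempty_setCol, nonempty_mixCol (h.isTransitionRow s hm).1,
      h.nonempty_iff]
  letter r c x hx := by
    simp only [slide, setCol, mixCol] at hx
    have := h.letter
    cases s <;> simp only [Sign.letter] at hx <;> grind
  col r q c hrq hr hq := by
    rcases eq_or_ne c (s.front k) with rfl | hf
    · have := (mem_slide_front.1 hr).2.trans (mem_slide_front.1 hq).2.symm
      omega
    rcases eq_or_ne c (s.back k) with rfl | hb
    · obtain ⟨-, r', hr', hr⟩ := (h.letter_mem_slide_back hD hm .minus).1 hr
      obtain ⟨-, q', hq', hq⟩ := (h.letter_mem_slide_back hD hm .plus).1 hq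
      exact h.col r' q' _ (hr'.trans_lt (hrq.trans_le hq')) hr hq
    · rw [slide_of_ne hf hb] at hr hq
      exact h.col r q c hrq hr hq

theorem mixed_slide_back (h : IsTwoLetter a D S) (hD : D.OrdConnected)
    (hm : Mixed a S (s.front k)) (hd : Descent a S k) :
    Mixed a (slide a s k S) (s.back k) := by
  obtain ⟨r, hr, hr'⟩ := (descent_iff s).1 hd
  obtain ⟨q, hq⟩ := hm.colHas s
  obtain ⟨hqD, -⟩ := corners_mem hD (h.mem_region hq) (h.mem_region hr') (h.le_of_letter_mem hq hr)
  exact (mixed_iff s).2 ⟨⟨q, (h.letter_mem_slide_back hD hm s).2 ⟨hqD, q, .rfl, hq⟩⟩,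
    ⟨r, (h.letter_mem_slide_back hD hm s.flip).2 ⟨h.mem_region hr', r, .rfl, hr⟩⟩⟩

theorem flip_letter_mem_front_of_slide (h : IsTwoLetter a D S) (hD : D.OrdConnected)
    (hm : Mixed a S (s.front k)) (hr : s.flip.letter a ∈ slide a s k S r (s.back k)) :
    s.flip.letter a ∈ S r (s.front k) := by
  obtain ⟨hrD, q, hrq, hq⟩ := (h.letter_mem_slide_back hD hm s.flip).1 hr
  exact h.letter_mem_of_le (corners_mem hD (h.mem_region hq) hrD (Sign.le_flip.1 hrq)).2 hrq hq

theorem letter_mem_front_of_slide (h : IsTwoLetter a D S) (hD : D.OrdConnected)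
    (hm : Mixed a S (s.front k)) (hrD : (r, s.front k) ∈ D)
    (hr : s.letter a ∈ slide a s k S r (s.back k)) : s.letter a ∈ S r (s.front k) := by
  obtain ⟨-, q, hrq, hq⟩ := (h.letter_mem_slide_back hD hm s).1 hr
  exact h.letter_mem_of_le hrD hrq hq

end IsTwoLetter

end TwoLetter


section SignedColumns

variable {a L k c A : ℕ} {s : Sign} {D : Set (ℕ × ℕ)} {S S' : Filling}

/-! ### Signs of columns -/

open Classical in
/-- The sign of column `c`, if it is pure. -/
noncomputable def columnSign (a : ℕ) (S : Filling) (c : ℕ) : Option Sign :=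
  if IsPure a .plus S c then some .plus else if IsPure a .minus S c then some .minus else none

/-- The signature of a two-letter filling with columns below `L`, without column indices. -/
noncomputable def signWord (a L : ℕ) (S : Filling) : List Sign :=
  (List.range L).filterMap (columnSign a S)

/-- The signature of a two-letter filling with columns below `L`. -/
noncomputable def signedColumns (a L : ℕ) (S : Filling) : List (Sign × ℕ) :=
  (List.range L).filterMap fun c => (columnSign a S c).map (·, c)

theorem columnSign_eq_some_iff : columnSign a S c = some s ↔ IsPure a s S c := by
  unfold columnSign
  split_ifs with hp hm
  · have hm : ¬ IsPure a .minus S c := hp.not_flip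
    cases s <;> simp [hp, hm]
  · cases s <;> simp [hp, hm]
  · cases s <;> simp [hp, hm]

theorem columnSign_eq_none_of_mixed (h : Mixed a S c) : columnSign a S c = none :=
  Option.eq_none_iff_forall_ne_some.2 fun s hs => h.not_isPure s (columnSign_eq_some_iff.1 hs)

theorem columnSign_congr (h : ∀ r, S r c = S' r c) : columnSign a S c = columnSign a S' c :=
  Option.ext fun s => by rw [columnSign_eq_some_iff, columnSign_eq_some_iff, IsPure.congr h]

theorem mem_signedColumns : (s, c) ∈ signedColumns a L S ↔ c < L ∧ IsPure a s S c := by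
  simp [signedColumns, columnSign_eq_some_iff]

theorem map_fst_signedColumns : (signedColumns a L S).map Prod.fst = signWord a L S := by
  simp [signedColumns, signWord, List.map_filterMap, Function.comp_def]

theorem pairwise_snd_signedColumns :
    (signedColumns a L S).Pairwise fun x y => x.2 < y.2 := by
  refine List.Pairwise.filterMap _ (fun c d hcd x hx y hy => ?_) List.pairwise_lt_range
  simp only [Option.map_eq_some_iff] at hx hy
  obtain ⟨_, _, rfl⟩ := hx
  obtain ⟨_, _, rfl⟩ := hy
  exact hcd

theorem filterMap_range_congr_of_adjacent {α : Type*} {g g' : ℕ → Option α} (hk : k + 1 < L)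
    (hne : ∀ c, c ≠ k → c ≠ k + 1 → g c = g' c)
    (heq : (g k).toList ++ (g (k + 1)).toList = (g' k).toList ++ (g' (k + 1)).toList) :
    (List.range L).filterMap g = (List.range L).filterMap g' := by
  obtain ⟨m, rfl⟩ := Nat.exists_eq_add_of_le hk
  have split (f : ℕ → Option α) : (List.range (k + 1 + 1 + m)).filterMap f =
      (List.range k).filterMap f ++ ((f k).toList ++ (f (k + 1)).toList) ++
        (List.range m).filterMap fun j => f (k + 1 + 1 + j) := by
    rw [List.range_add, List.range_succ, List.range_succ]
    rcases hk : f k with _ | _ <;> rcases hk' : f (k + 1) with _ | _ <;>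
      simp [hk, hk', List.filterMap_map]
  rw [split g, split g', heq]
  congr 2
  · exact List.filterMap_congr fun c hc => hne c (by grind) (by grind)
  · exact funext fun j => hne _ (by omega) (by omega)

theorem signWord_slide (h : IsTwoLetter a D S) (hD : D.OrdConnected) (hL : ∀ x ∈ D, x.2 < L)
    (hm : Mixed a S (s.front k)) (hp : IsPure a s S (s.back k)) (hd : Descent a S k) :
    signWord a L (slide a s k S) = signWord a L S := by
  have front_sign := columnSign_eq_none_of_mixed hm
  have back_sign := columnSign_eq_some_iff.2 hp
  have front_sign' := columnSign_eq_some_iff.2 (isPure_slide_front hm)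
  have back_sign' := columnSign_eq_none_of_mixed (h.mixed_slide_back hD hm hd)
  obtain ⟨r, -, hr⟩ := hd
  refine filterMap_range_congr_of_adjacent (hL _ (h.mem_region hr)) (fun c hk hk' => ?_) ?_
  · refine columnSign_congr fun r => slide_of_ne ?_ ?_ <;> cases s <;> assumption
  · cases s <;> simp only [Sign.front, Sign.back] at * <;> simp [*]

theorem signedColumns_setCol {u v : List (Sign × ℕ)}
    (h : signedColumns a L S = u ++ (s.flip, A) :: v) :
    signedColumns a L (setCol A (s.letter a) S) = u ++ (s, A) :: v := by
  have old_sign : IsPure a s.flip S A := (mem_signedColumns.1 (by rw [h]; simp)).2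
  have new_sign : IsPure a s (setCol A (s.letter a) S) A :=
    isPure_setCol (old_sign.1.imp fun _ hr => ⟨_, hr⟩)
  let φ : Sign × ℕ → Sign × ℕ := fun x => if x.2 = A then (s, A) else x
  have map_eq : signedColumns a L (setCol A (s.letter a) S) = (signedColumns a L S).map φ := by
    rw [signedColumns, signedColumns, List.map_filterMap]
    refine List.filterMap_congr fun c _ => ?_
    rcases eq_or_ne c A with rfl | hc
    · simp [columnSign_eq_some_iff.2 old_sign, columnSign_eq_some_iff.2 new_sign, φ]
    · rw [columnSign_congr fun r => setCol_of_ne hc]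
      cases columnSign a S c <;> simp [φ, hc]
  have columns := pairwise_snd_signedColumns (a := a) (L := L) (S := S)
  rw [h, List.pairwise_append, List.pairwise_cons] at columns
  obtain ⟨-, ⟨after, -⟩, before⟩ := columns
  have map_u : u.map φ = u :=
    (List.map_congr_left fun x hx => if_neg (before x hx _ List.mem_cons_self).ne).trans u.map_id
  have map_v : v.map φ = v :=
    (List.map_congr_left fun x hx => if_neg (after x hx).ne').trans v.map_id
  rw [map_eq, h, List.map_append, List.map_cons, map_u, map_v]
  simp [φ]

end SignedColumns


section Moving

variable {a k d A : ℕ} {s : Sign} {D : Set (ℕ × ℕ)} {S S₀ X Y N : Filling}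

/-! ### Moving a pure column through a filling -/

theorem ResStep.exists_descent (h : ResStep a S X) : ∃ k, Descent a S k := by
  cases h with
  | m1 k hd | twoM k hd | twoOne k hd => exact ⟨k, hd⟩

theorem resolvesTo_iff_eq (h : ∀ k, ¬ Descent a S k) : ResolvesTo a S N ↔ N = S := by
  refine ⟨fun ⟨hSN, _⟩ => ?_, ?_⟩
  · rcases hSN.cases_head with hSN | ⟨X, hSX, -⟩
    · exact hSN.symm
    · exact absurd hSX.exists_descent (not_exists.2 h)
  · rintro rfl
    exact ⟨.refl, h⟩

theorem resolvesTo_iff_of_resStep_iff (h : ∀ X, ResStep a S X ↔ X = Y) :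
    ResolvesTo a S N ↔ ResolvesTo a Y N := by
  have hSY : ResStep a S Y := (h Y).2 rfl
  refine ⟨fun ⟨hSN, hN⟩ => ⟨?_, hN⟩, fun ⟨hYN, hN⟩ => ⟨.head hSY hYN, hN⟩⟩
  rcases hSN.cases_head with rfl | ⟨X, hSX, hXN⟩
  · exact absurd hSY.exists_descent (not_exists.2 hN)
  · rwa [← (h X).1 hSX]

/-- A state `S` of the resolution algorithm, started on the descent-free filling `S₀` with one
column changed to sign `s`, at which the changed column has moved to `d`. Columns ahead of `d`, that
is before it in the order `s.Lt`, are still those of `S₀`. The field `letter_mem_behind` ensures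
that moving on creates no descent behind `d`, and `exists_isPure_between` excludes the rule (21). -/
structure MovingState (a : ℕ) (D : Set (ℕ × ℕ)) (S₀ : Filling) (s : Sign) (d : ℕ)
    (S : Filling) : Prop where
  isTwoLetter : IsTwoLetter a D S
  isPure : IsPure a s S d
  ahead_eq : ∀ c, s.Lt c d → ∀ r, S r c = S₀ r c
  back_eq_of_descent : ∀ k, Descent a S k → s.back k = d
  letter_mem_behind : ∀ k, s.front k = d → ∀ r, (r, d) ∈ D → s.letter a ∈ S r (s.back k) →
    s.letter a ∈ S₀ r d
  exists_isPure_between : ∀ c, s.Lt c d → IsPure a s.flip S₀ c →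
    ∃ e, s.Lt c e ∧ s.Lt e d ∧ IsPure a s S₀ e

theorem IsTwoLetter.movingState_setCol (h : IsTwoLetter a D S₀)
    (h₀ : ∀ k, ¬ Descent a S₀ k) (hA : IsPure a s.flip S₀ A)
    (exists_isPure_between : ∀ c, s.Lt c A → IsPure a s.flip S₀ c →
      ∃ e, s.Lt c e ∧ s.Lt e A ∧ IsPure a s S₀ e) :
    MovingState a D S₀ s A (setCol A (s.letter a) S₀) where
  isTwoLetter := h.setCol
  isPure := isPure_setCol (hA.1.imp fun _ hr => ⟨_, hr⟩)
  ahead_eq c hc r := setCol_of_ne hc.ne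
  back_eq_of_descent k hk := by
    by_contra hb
    obtain ⟨r, hf, hr⟩ := (descent_iff s).1 hk
    by_cases hfA : s.front k = A
    · exact (isPure_setCol (hA.1.imp fun _ hr => ⟨_, hr⟩)).2 ⟨r, hfA ▸ hf⟩
    · rw [setCol_of_ne hfA] at hf
      rw [setCol_of_ne hb] at hr
      exact h₀ k ((descent_iff s).2 ⟨r, hf, hr⟩)
  letter_mem_behind := by
    rintro k rfl r hr hb
    rw [setCol_of_ne (s.front_ne_back k).symm] at hb
    exact (h.letter_mem_or hr s).resolve_right fun hf => h₀ k ((descent_iff s).2 ⟨r, hf, hb⟩)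
  exists_isPure_between := exists_isPure_between

namespace MovingState

theorem mixed_front (h : MovingState a D S₀ s (s.back k) S) (hd : Descent a S k) :
    Mixed a S (s.front k) := by
  obtain ⟨r, hr, -⟩ := (descent_iff s).1 hd
  rcases h.isTwoLetter.isPure_or_mixed (h.isTwoLetter.mem_region hr) s with hp | hp | hm
  · exact absurd ⟨r, hr⟩ hp.2
  · obtain ⟨e, hke, hek, -⟩ := h.exists_isPure_between _ (s.front_lt_back k)
      ((IsPure.congr (h.ahead_eq _ (s.front_lt_back k))).1 hp)
    exact absurd hek (Sign.not_lt_of_front_lt hke)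
  · exact hm

theorem back_eq_of_descent_slide (h : MovingState a D S₀ s (s.back k) S) (hD : D.OrdConnected)
    (h₀ : ∀ k, ¬ Descent a S₀ k) (hm : Mixed a S (s.front k)) {l : ℕ}
    (hl : Descent a (slide a s k S) l) : s.back l = s.front k := by
  by_contra hne
  obtain ⟨r, hf, hb⟩ := (descent_iff s).1 hl
  rcases eq_or_ne l k with rfl | hlk
  · exact (isPure_slide_front hm).2 ⟨r, hf⟩
  rw [slide_of_ne hne (s.back_injective.ne hlk)] at hb
  by_cases hlb : s.front l = s.back k
  · rw [hlb] at hf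
    have hrb := (h.isTwoLetter.letter_mem_slide_back hD hm _).1 hf |>.1
    refine h₀ k ((descent_iff s).2 ⟨r, ?_, h.letter_mem_behind l hlb r hrb hb⟩)
    rw [← h.ahead_eq _ (s.front_lt_back k)]
    exact h.isTwoLetter.flip_letter_mem_front_of_slide hD hm hf
  · rw [slide_of_ne (s.front_injective.ne hlk) hlb] at hf
    exact hlk (s.back_injective (h.back_eq_of_descent l ((descent_iff s).2 ⟨r, hf, hb⟩)))

protected theorem slide (h : MovingState a D S₀ s (s.back k) S) (hD : D.OrdConnected)
    (h₀ : ∀ k, ¬ Descent a S₀ k) (hd : Descent a S k) :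
    MovingState a D S₀ s (s.front k) (slide a s k S) where
  isTwoLetter := h.isTwoLetter.slide hD (h.mixed_front hd)
  isPure := isPure_slide_front (h.mixed_front hd)
  ahead_eq c hc r := by
    have hcb := hc.trans (s.front_lt_back k)
    rw [slide_of_ne hc.ne hcb.ne, h.ahead_eq c hcb]
  back_eq_of_descent _ hl := h.back_eq_of_descent_slide hD h₀ (h.mixed_front hd) hl
  letter_mem_behind l hl r hr hb := by
    rw [s.front_injective hl] at hb
    rw [← h.ahead_eq _ (s.front_lt_back k)]
    exact h.isTwoLetter.letter_mem_front_of_slide hD (h.mixed_front hd) hr hb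
  exists_isPure_between c hc hp := by
    obtain ⟨e, hce, hek, he⟩ := h.exists_isPure_between c (hc.trans (s.front_lt_back k)) hp
    have e_ne : e ≠ s.front k := by
      rintro rfl
      exact (h.mixed_front hd).not_isPure s
        ((IsPure.congr (h.ahead_eq _ (s.front_lt_back k))).2 he)
    exact ⟨e, hce, Sign.lt_front hek e_ne, he⟩

theorem resStep_iff (h : MovingState a D S₀ s (s.back k) S) (hd : Descent a S k) :
    ResStep a S X ↔ X = slide a s k S := by
  have hm := h.mixed_front hd
  have hp := h.isPure
  have k_eq {l : ℕ} (hl : Descent a S l) : l = k := s.back_injective (h.back_eq_of_descent l hl)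
  constructor
  · intro hX
    cases hX with
    | m1 l hl hf hb =>
      obtain rfl := k_eq hl
      cases s
      exacts [rfl, absurd hp (hf.not_isPure .minus)]
    | twoM l hl hf hb =>
      obtain rfl := k_eq hl
      cases s
      exacts [absurd hp (hb.not_isPure .plus), rfl]
    | twoOne l hl hf hb =>
      obtain rfl := k_eq hl
      cases s
      exacts [absurd hf (hm.not_isPure .minus), absurd hb (hm.not_isPure .plus)]
  · rintro rfl
    cases s
    exacts [.m1 k hd hm hp, .twoM k hd hp hm]

theorem exists_resolvesTo_iff {L : ℕ} (h : MovingState a D S₀ s d S) (hD : D.OrdConnected)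
    (hL : ∀ x ∈ D, x.2 < L) (h₀ : ∀ k, ¬ Descent a S₀ k) :
    ∃ N, (∀ N', ResolvesTo a S N' ↔ N' = N) ∧ IsTwoLetter a D N ∧
      signWord a L N = signWord a L S := by
  have hdL : d ∈ Set.Iio L := by
    obtain ⟨r, hr⟩ := h.isPure.1
    exact hL _ (h.isTwoLetter.mem_region hr)
  have wf : (Set.Iio L).WellFoundedOn s.Lt := (Set.finite_Iio L).wellFoundedOn
  revert S
  apply wf.induction hdL
  intro d _ ih S h
  by_cases hS : ∃ k, Descent a S k
  · obtain ⟨k, hk⟩ := hS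
    obtain rfl := h.back_eq_of_descent k hk
    have hfL : s.front k ∈ Set.Iio L := by
      obtain ⟨r, hr⟩ := (h.mixed_front hk).1
      exact hL _ (h.isTwoLetter.mem_region hr)
    obtain ⟨N, hN, hN', hsign⟩ := ih _ hfL (s.front_lt_back k) (h.slide hD h₀ hk)
    refine ⟨N, fun N' => ?_, hN', hsign.trans ?_⟩
    · rw [resolvesTo_iff_of_resStep_iff fun _ => h.resStep_iff hk, hN]
    · exact signWord_slide h.isTwoLetter hD hL (h.mixed_front hk) h.isPure hk
  · exact ⟨S, fun _ => resolvesTo_iff_eq (not_exists.1 hS), h.isTwoLetter, rfl⟩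

end MovingState

end Moving


/-! ### The two-letter part of a set-valued reverse plane partition -/

theorem ordConnected_inSkew (lam mu : YoungDiagram) :
    {x : ℕ × ℕ | InSkew lam mu x.1 x.2}.OrdConnected :=
  lam.isLowerSet.ordConnected.inter mu.isLowerSet.compl.ordConnected

theorem SetLE.trans {A B C : Finset ℕ} (hB : B.Nonempty) (h : SetLE A B) (h' : SetLE B C) :
    SetLE A C := by
  obtain ⟨b, hb⟩ := hB
  exact fun a ha c hc => (h a ha b hb).trans (h' b hb c hc)

theorem setLE_of_lt_of_succ {F : ℕ → Finset ℕ} {I : Set ℕ} (hI : I.OrdConnected)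
    (nonempty : ∀ j ∈ I, (F j).Nonempty)
    (step : ∀ j, j ∈ I → j + 1 ∈ I → SetLE (F j) (F (j + 1))) {j k : ℕ} (hj : j ∈ I) (hk : k ∈ I)
    (hjk : j < k) : SetLE (F j) (F k) := by
  induction k, hjk using Nat.le_induction with
  | base => exact step j hj hk
  | succ k hjk ih =>
    have hkI : k ∈ I := hI.out hj hk ⟨Nat.le_of_succ_le hjk, Nat.le_succ k⟩
    exact (ih hkI).trans (nonempty k hkI) (step k hkI hk)

theorem mem_restrictTwo {i r c x : ℕ} {S : Filling} :
    x ∈ restrictTwo i S r c ↔ x ∈ S r c ∧ (x = i ∨ x = i + 1) := Finset.mem_filter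

theorem restrictTwo_replaceTwo {i : ℕ} {D : Set (ℕ × ℕ)} {S N : Filling}
    (hN : IsTwoLetter i D N) : restrictTwo i (replaceTwo i S N) = N := by
  funext r c
  ext x
  have := hN.letter r c x
  simp only [mem_restrictTwo, replaceTwo, Finset.mem_union, Finset.mem_filter]
  tauto

namespace SVRPP

variable {n i r c r' c' : ℕ} {lam mu : YoungDiagram} {S N : Filling} (T : SVRPP n lam mu)

theorem inSkew_of_mem {x : ℕ} (h : x ∈ T.entry r c) : InSkew lam mu r c := by
  by_contra h'
  rw [T.eq_empty r c h'] at h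
  exact Finset.notMem_empty x h

theorem setLE_row (h : InSkew lam mu r c) (h' : InSkew lam mu r c') (hc : c < c') :
    SetLE (T.entry r c) (T.entry r c') :=
  setLE_of_lt_of_succ (I := {j | InSkew lam mu r j})
    ((ordConnected_inSkew lam mu).preimage_mono fun _ _ h => Prod.mk_le_mk.2 ⟨le_rfl, h⟩)
    (T.nonempty r) (T.row_le r) h h' hc

theorem setLE_col (h : InSkew lam mu r c) (h' : InSkew lam mu r' c) (hr : r < r') :
    SetLE (T.entry r c) (T.entry r' c) :=
  setLE_of_lt_of_succ (F := fun j => T.entry j c) (I := {j | InSkew lam mu j c})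
    ((ordConnected_inSkew lam mu).preimage_mono fun _ _ h => Prod.mk_le_mk.2 ⟨h, le_rfl⟩)
    (T.nonempty · c) (T.col_le · c) h h' hr

theorem setLE_of_lt {x y : ℕ × ℕ} (hx : InSkew lam mu x.1 x.2) (hy : InSkew lam mu y.1 y.2)
    (hxy : x < y) : SetLE (T.entry x.1 x.2) (T.entry y.1 y.2) := by
  obtain ⟨r, c⟩ := x
  obtain ⟨r', c'⟩ := y
  obtain ⟨⟨hr, hc⟩, hne⟩ := hxy.le, hxy.ne
  dsimp only at *
  rcases hr.eq_or_lt with rfl | hr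
  · exact T.setLE_row hx hy (hc.lt_of_ne fun h => hne (h ▸ rfl))
  rcases hc.eq_or_lt with rfl | hc
  · exact T.setLE_col hx hy hr
  have corner : InSkew lam mu r c' :=
    (ordConnected_inSkew lam mu).out hx hy
      (show (r, c') ∈ Set.Icc (r, c) (r', c') from ⟨⟨le_rfl, hc.le⟩, ⟨hr.le, le_rfl⟩⟩)
  exact (T.setLE_row hx corner hc).trans (T.nonempty r c' corner) (T.setLE_col corner hy hr)

/-- The boxes of `T` containing `i` or `i + 1`. -/
def twoRegion (i : ℕ) : Set (ℕ × ℕ) := {x | (restrictTwo i T.entry x.1 x.2).Nonempty}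

variable {T}

theorem inSkew_of_mem_twoRegion {x : ℕ × ℕ} (h : x ∈ T.twoRegion i) : InSkew lam mu x.1 x.2 := by
  obtain ⟨y, hy⟩ := h
  exact T.inSkew_of_mem (mem_restrictTwo.1 hy).1

theorem col_lt_of_mem_twoRegion {x : ℕ × ℕ} (h : x ∈ T.twoRegion i) : x.2 < lam.rowLen 0 :=
  YoungDiagram.mem_iff_lt_rowLen.1
    (lam.up_left_mem (Nat.zero_le x.1) le_rfl (inSkew_of_mem_twoRegion h).1)

variable (T)

theorem ordConnected_twoRegion (i : ℕ) : (T.twoRegion i).OrdConnected where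
  out' x hx z hz y hy := by
    rcases hy.1.eq_or_lt with rfl | hxy
    · exact hx
    rcases hy.2.eq_or_lt with rfl | hyz
    · exact hz
    have hyT : InSkew lam mu y.1 y.2 := (ordConnected_inSkew lam mu).out
      (inSkew_of_mem_twoRegion hx) (inSkew_of_mem_twoRegion hz) hy
    have hTx := T.setLE_of_lt (inSkew_of_mem_twoRegion hx) hyT hxy
    have hTz := T.setLE_of_lt hyT (inSkew_of_mem_twoRegion hz) hyz
    obtain ⟨p, hp⟩ := hx
    obtain ⟨q, hq⟩ := T.nonempty _ _ hyT
    obtain ⟨t, ht⟩ := hz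
    rw [mem_restrictTwo] at hp ht
    have := hTx p hp.1 q hq
    have := hTz q hq t ht.1
    exact ⟨q, mem_restrictTwo.2 ⟨hq, by omega⟩⟩

theorem isTwoLetter_restrictTwo (i : ℕ) :
    IsTwoLetter i (T.twoRegion i) (restrictTwo i T.entry) where
  nonempty_iff _ _ := Iff.rfl
  letter _ _ _ hx := (mem_restrictTwo.1 hx).2
  col r q c hrq hr hq := by
    have hr := (mem_restrictTwo.1 hr).1
    have hq := (mem_restrictTwo.1 hq).1
    have := T.setLE_col (T.inSkew_of_mem hr) (T.inSkew_of_mem hq) hrq _ hr _ hq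
    omega

theorem not_descent_restrictTwo (i k : ℕ) : ¬ Descent i (restrictTwo i T.entry) k := by
  rintro ⟨r, hl, hr⟩
  have hl := (mem_restrictTwo.1 hl).1
  have hr := (mem_restrictTwo.1 hr).1
  have := T.row_le r k (T.inSkew_of_mem hl) (T.inSkew_of_mem hr) _ hl _ hr
  omega

variable {T}

theorem setLE_replaceTwo (hN : IsTwoLetter i (T.twoRegion i) N)
    (h : SetLE (T.entry r c) (T.entry r' c')) (hN' : i + 1 ∈ N r c → i ∉ N r' c') :
    SetLE (replaceTwo i T.entry N r c) (replaceTwo i T.entry N r' c') := by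
  intro x hx y hy
  simp only [replaceTwo, Finset.mem_union, Finset.mem_filter] at hx hy
  rcases hx with ⟨hx, hx'⟩ | hx <;> rcases hy with ⟨hy, hy'⟩ | hy
  · exact h x hx y hy
  · obtain ⟨z, hz⟩ := hN.mem_region hy
    rw [mem_restrictTwo] at hz
    have := h x hx z hz.1
    have := hN.letter _ _ y hy
    omega
  · obtain ⟨z, hz⟩ := hN.mem_region hx
    rw [mem_restrictTwo] at hz
    have := h z hz.1 y hy
    have := hN.letter _ _ x hx
    omega
  · rcases hN.letter _ _ x hx with rfl | rfl <;> rcases hN.letter _ _ y hy with rfl | rfl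
    exacts [le_rfl, Nat.le_succ _, absurd hy (hN' hx), le_rfl]

theorem exists_entry_eq_replaceTwo (hi : 1 ≤ i) (hin : i < n)
    (hN : IsTwoLetter i (T.twoRegion i) N) (hd : ∀ k, ¬ Descent i N k) :
    ∃ T' : SVRPP n lam mu, T'.entry = replaceTwo i T.entry N := by
  refine ⟨⟨replaceTwo i T.entry N, fun r c h => ?_, fun r c h => ?_, fun r c x hx => ?_,
    fun r c h h' => ?_, fun r c h h' => ?_⟩, rfl⟩
  · refine Finset.union_eq_empty.2 ⟨by rw [T.eq_empty r c h, Finset.filter_empty], ?_⟩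
    by_contra hne
    exact h (inSkew_of_mem_twoRegion
      ((hN.nonempty_iff r c).1 (Finset.nonempty_iff_ne_empty.2 hne)))
  · obtain ⟨x, hx⟩ := T.nonempty r c h
    by_cases hx' : x = i ∨ x = i + 1
    · exact ((hN.nonempty_iff r c).2 ⟨x, mem_restrictTwo.2 ⟨hx, hx'⟩⟩).mono
        Finset.subset_union_right
    · exact ⟨x, Finset.mem_union_left _ (Finset.mem_filter.2 ⟨hx, hx'⟩)⟩
  · rcases Finset.mem_union.1 hx with hx | hx
    · exact T.subset r c (Finset.mem_filter.1 hx).1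
    · have := hN.letter r c x hx
      rw [Finset.mem_Icc]
      omega
  · exact setLE_replaceTwo hN (T.row_le r c h h') fun hl hr => hd c ⟨r, hl, hr⟩
  · exact setLE_replaceTwo hN (T.col_le r c h h') (hN.col r (r + 1) c (Nat.lt_succ_self r))

theorem exists_resolve_eq_some (hi : 1 ≤ i) (hin : i < n)
    (hS : ∀ N', ResolvesTo i S N' ↔ N' = N) (hN : IsTwoLetter i (T.twoRegion i) N) :
    ∃ T', resolve i T S = some T' ∧ restrictTwo i T'.entry = N := by
  obtain ⟨T', hT'⟩ := exists_entry_eq_replaceTwo hi hin hN ((hS N).2 rfl).2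
  have unique : ∃! T' : SVRPP n lam mu,
      ∃ N, ResolvesTo i S N ∧ T'.entry = replaceTwo i T.entry N := by
    simp only [hS, exists_eq_left]
    exact ⟨T', hT', fun T'' hT'' => SVRPP.ext (hT''.trans hT'.symm)⟩
  obtain ⟨N', hN', hentry⟩ := unique.choose_spec.1
  refine ⟨unique.choose, dif_pos unique, ?_⟩
  rw [hentry, (hS N').1 hN', restrictTwo_replaceTwo hN]

end SVRPP


section Operators

variable {n i a L c A : ℕ} {lam mu : YoungDiagram} {s : Sign} {T : SVRPP n lam mu} {S : Filling}
  {u v : List (Sign × ℕ)} {P P' M M' : List ℕ}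

/-! ### The crystal operators and the reduced signature -/

theorem signature_eq_signedColumns (i : ℕ) (T : SVRPP n lam mu) :
    signature i T = signedColumns i (lam.rowLen 0) (restrictTwo i T.entry) := by
  refine List.filterMap_congr fun c _ => ?_
  unfold columnSign
  split_ifs <;> first | rfl | contradiction

theorem reducedSignature_eq (i : ℕ) (T : SVRPP n lam mu) :
    reducedSignature i T = pluses (plusCols i T) ++ minuses (minusCols i T) := by
  obtain ⟨P, M, h⟩ := exists_cancelPairs_eq (signature i T)
  have h : reducedSignature i T = pluses P ++ minuses M := h
  have plus_eq : plusCols i T = P := by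
    simp [plusCols, h, List.filterMap_append, List.filterMap_map]
  have minus_eq : minusCols i T = M := by
    simp [minusCols, h, List.filterMap_append, List.filterMap_map]
  rw [h, plus_eq, minus_eq]

theorem length_eq_of_map_fst_eq
    (h : (pluses P ++ minuses M).map Prod.fst = (pluses P' ++ minuses M').map Prod.fst) :
    P.length = P'.length ∧ M.length = M'.length := by
  have plus_count := congrArg (List.countP fun | .plus => true | .minus => false) h
  have minus_count := congrArg (List.countP fun | .plus => false | .minus => true) h
  exact ⟨by simpa [List.countP_replicate] using plus_count,
    by simpa [List.countP_replicate] using minus_count⟩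

theorem exists_isPure_between (h : signedColumns a L S = u ++ (s.flip, A) :: v)
    (hu : cancelPairs u = pluses P) (hv : cancelPairs v = minuses M) (hcL : c < L)
    (hcA : s.Lt c A) (hc : IsPure a s.flip S c) :
    ∃ e, s.Lt c e ∧ s.Lt e A ∧ IsPure a s S e := by
  have columns := pairwise_snd_signedColumns (a := a) (L := L) (S := S)
  have hmem : (s.flip, c) ∈ signedColumns a L S := mem_signedColumns.2 ⟨hcL, hc⟩
  have isPure_of_mem {b : ℕ} (hb : (s, b) ∈ signedColumns a L S) : IsPure a s S b :=
    (mem_signedColumns.1 hb).2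
  rw [h] at columns hmem isPure_of_mem
  replace hmem : (s.flip, c) ∈ u ∨ (s.flip, c) ∈ v := by simpa [hcA.ne] using hmem
  rw [List.pairwise_append, List.pairwise_cons] at columns
  obtain ⟨columns_u, ⟨A_lt, columns_v⟩, lt_A⟩ := columns
  cases s with
  | plus =>
    have hcu : (Sign.minus, c) ∈ u :=
      hmem.resolve_right fun hcv => (A_lt _ hcv).asymm hcA
    obtain ⟨u₁, u₂, rfl⟩ := List.append_of_mem hcu
    obtain ⟨b, hb⟩ := exists_plus_mem_of_cancelPairs_eq_pluses hu
    rw [List.pairwise_append, List.pairwise_cons] at columns_u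
    exact ⟨b, columns_u.2.1.1 _ hb, lt_A (.plus, b) (by simp [hb]) _ List.mem_cons_self,
      isPure_of_mem (by simp [hb])⟩
  | minus =>
    have hcv : (Sign.plus, c) ∈ v :=
      hmem.resolve_left fun hcu => (lt_A _ hcu _ List.mem_cons_self).asymm hcA
    obtain ⟨v₁, v₂, rfl⟩ := List.append_of_mem hcv
    obtain ⟨b, hb⟩ := exists_minus_mem_of_cancelPairs_eq_minuses hv
    rw [List.pairwise_append] at columns_v
    exact ⟨b, columns_v.2.2 _ hb _ List.mem_cons_self, A_lt (.minus, b) (by simp [hb]),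
      isPure_of_mem (by simp [hb])⟩

theorem exists_resolve_setCol (hi : 1 ≤ i) (hin : i < n)
    (h : reducedSignature i T = pluses P ++ (s.flip, A) :: minuses M) :
    ∃ T', resolve i T (setCol A (s.letter i) (restrictTwo i T.entry)) = some T' ∧
      (reducedSignature i T').map Prod.fst = (pluses P ++ (s, A) :: minuses M).map Prod.fst := by
  obtain ⟨u, v, huv, hu, hv⟩ := exists_split_of_cancelPairs_eq h
  rw [signature_eq_signedColumns] at huv
  have col_lt : ∀ x ∈ T.twoRegion i, x.2 < lam.rowLen 0 := fun _ => SVRPP.col_lt_of_mem_twoRegion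
  have hA : IsPure i s.flip (restrictTwo i T.entry) A :=
    (mem_signedColumns (L := lam.rowLen 0).1 (by rw [huv]; simp)).2
  have start := (T.isTwoLetter_restrictTwo i).movingState_setCol (T.not_descent_restrictTwo i) hA
    fun c hcA hc => exists_isPure_between huv hu hv
      (hc.1.elim fun _ hr => col_lt _ ((T.isTwoLetter_restrictTwo i).mem_region hr)) hcA hc
  obtain ⟨N, hN, hN', hsign⟩ := start.exists_resolvesTo_iff (T.ordConnected_twoRegion i) col_lt
    (T.not_descent_restrictTwo i)
  obtain ⟨T', hT', rfl⟩ := SVRPP.exists_resolve_eq_some hi hin hN hN'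
  refine ⟨T', hT', ?_⟩
  rw [← cancelPairs_append_cons hu hv, ← signedColumns_setCol huv]
  refine map_fst_cancelPairs_congr ?_
  rw [signature_eq_signedColumns, map_fst_signedColumns, hsign, map_fst_signedColumns]

theorem exists_e_eq_some (hi : 1 ≤ i) (hin : i < n) {m : ℕ}
    (hm : (minusCols i T).length = m + 1) :
    ∃ T', e i T = some T' ∧ (minusCols i T').length = m := by
  obtain ⟨A, M, hA⟩ := List.exists_cons_of_length_eq_add_one hm
  have hT := reducedSignature_eq i T
  rw [hA] at hT
  obtain ⟨T', hT', hsign⟩ := exists_resolve_setCol (s := .plus) hi hin hT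
  refine ⟨T', by rw [e, hA]; exact hT', ?_⟩
  rw [reducedSignature_eq i T'] at hsign
  have := length_eq_of_map_fst_eq (P' := plusCols i T ++ [A]) (M' := M) (by simpa using hsign)
  simp_all

theorem exists_f_eq_some (hi : 1 ≤ i) (hin : i < n) {m : ℕ}
    (hm : (plusCols i T).length = m + 1) :
    ∃ T', f i T = some T' ∧ (plusCols i T').length = m := by
  obtain ⟨P, A, hA⟩ := (List.eq_nil_or_concat' (plusCols i T)).resolve_left
    (List.ne_nil_of_length_eq_add_one hm)
  have hT : reducedSignature i T = pluses P ++ (.plus, A) :: minuses (minusCols i T) := by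
    simpa [hA] using reducedSignature_eq i T
  obtain ⟨T', hT', hsign⟩ := exists_resolve_setCol (s := .minus) hi hin hT
  refine ⟨T', by rw [f, hA, List.getLast?_concat]; exact hT', ?_⟩
  rw [reducedSignature_eq i T'] at hsign
  have := length_eq_of_map_fst_eq (M' := A :: minusCols i T) hsign
  simp_all

end Operators

end SetValuedRPP

/-- `ε_i(T) = max {k : e_i^k(T) ≠ 0}` is the number of `−` signs, and
`φ_i(T) = max {k : f_i^k(T) ≠ 0}` is the number of `+` signs, in the reduced `i`-signature
of `T`. -/
theorem string_lengths_eq_signature_counts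
    (lam mu : YoungDiagram) (hsub : mu ≤ lam) (n : ℕ) (i : ℕ) (hi : 1 ≤ i) (hin : i < n)
    (T : SetValuedRPP.SVRPP n lam mu) :
    IsGreatest {k : ℕ | SetValuedRPP.ePow i k T ≠ none}
        (SetValuedRPP.minusCols i T).length ∧
      IsGreatest {k : ℕ | SetValuedRPP.fPow i k T ≠ none}
        (SetValuedRPP.plusCols i T).length := by
  constructor
  · refine SetValuedRPP.isGreatest_iterate_bind_ne_none
      (len := fun T => (SetValuedRPP.minusCols i T).length) (fun T hT => ?_)
      (fun _ _ => SetValuedRPP.exists_e_eq_some hi hin) T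
    rw [SetValuedRPP.e, List.eq_nil_of_length_eq_zero hT]
    rfl
  · refine SetValuedRPP.isGreatest_iterate_bind_ne_none
      (len := fun T => (SetValuedRPP.plusCols i T).length) (fun T hT => ?_)
      (fun _ _ => SetValuedRPP.exists_f_eq_some hi hin) T
    rw [SetValuedRPP.f, List.eq_nil_of_length_eq_zero hT]
    rfl
end

section
/- Partitions are identified with their Young diagrams; for partitions $\mu\subseteq\lambda$, the skew shape $\lambda/\mu$ consists of the boxes of $\lambda$ not in $\mu$. For nonempty finite sets $A,B$ of positive integers write $A\le B$ if $\max A\le\min B$. For $n\ge 1$ let $\mathrm{SVRPP}^n(\lambda/\mu)$ be the set of fillings $T$ of the boxes of $\lambda/\mu$ with nonempty subsets of $\{1,\dots,n\}$ that weakly increase along rows and down columns (set-valued reverse plane partitions). Let $\mathrm{wt}(T)\in\mathbb Z^n$ be the vector whose $j$-th coordinate is the number of columns of $T$ having a box whose set contains $j$. *Descent resolution.* Let $1\le i\le n-1$, and consider fillings $S$ of a skew shape with nonempty subsets of $\{i,i+1\}$ that weakly increase down columns. A nonempty column of $S$ is $i$-pure if all its boxes contain $\{i\}$, $(i+1)$-pure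 if all its boxes contain $\{i+1\}$, and mixed otherwise. An index $k$ is a descent of $S$ if, in some row, $i+1$ lies in the set in column $k$ and $i$ lies in the set in column $k+1$. A resolution step at a descent $k$ changes columns $k$ and $k+1$ as follows. (M1) If column $k$ is mixed and column $k+1$ is $i$-pure, let $r$ be the smallest row in which column $k$ contains $i+1$, and $E$ the set there; column $k$ becomes $i$-pure, and column $k+1$ receives $\{i\}$ above row $r$, $E$ in row $r$, and $\{i+1\}$ below row $r$. (2M) If column $k$ is $(i+1)$-pure and column $k+1$ is mixed, let $r$ be the largest row in which column $k+1$ contains $i$, and $E$ the set there; column $k+1$ becomes $(i+1)$-pure, and column $k$ receives $\{i\}$ above row $r$, $E$ in row $r$, and $\{i+1\}$ below row $r$. (21) If column $k$ is $(i+1)$-pure and column $k+1$ is $i$-pure, column $k$ becomes $i$-pure and column $k+1$ becomes $(i+1)$-pure. The algorithm performs such steps, in any order, until no descent remains. *Operators.* For $T\in\mathrm{SVRPP}^n(\lambda/\mu)$ let $T^{(i)}$ be its restriction to the letters $i,i+1$ (each box keeps its intersection with $\{i,i+1\}$; boxes with empty intersection are discarded). The $i$-signature of $T$ has a $+$ for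 each $i$-pure and a $-$ for each $(i+1)$-pure column of $T^{(i)}$, from left to right; successively cancelling pairs in which a $-$ immediately precedes a $+$ gives the reduced $i$-signature $+\cdots+-\cdots-$. If it has no $-$, then $e_i(T)=0$; otherwise $e_i(T)$ is obtained from $T$ by replacing, in $T^{(i)}$, every $\{i+1\}$ in the column of the leftmost uncancelled $-$ by $\{i\}$, and then replacing $T^{(i)}$ in $T$ by the outcome of the descent-resolution algorithm. If it has no $+$, then $f_i(T)=0$; otherwise $f_i(T)$ is obtained in the same way by replacing every $\{i\}$ in the column of the rightmost uncancelled $+$ by $\{i+1\}$. *Theorem.* For every skew shape $\lambda/\mu$ and every $n\ge1$, the outcome of the algorithm in the definitions of $e_i$ and $f_i$ exists and is unique, and $\mathrm{SVRPP}^n(\lambda/\mu)$ with the maps $\mathrm{wt},e_i,f_i$ is a seminormal $\mathfrak{gl}_n$-crystal. That is, for all $T,T'\in\mathrm{SVRPP}^n(\lambda/\mu)$ and $1\le i\le n-1$: (a) $e_i(T),f_i(T)\in\mathrm{SVRPP}^n(\lambda/\mu)\sqcup\{0\}$; (b) $e_i(T)=T'$ if and only if $f_i(T')=T$, and in this case $\mathrm{wt}(T')=\mathrm{wt}(T)+\mathbf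 e_i-\mathbf e_{i+1}$, where $\mathbf e_1,\dots,\mathbf e_n$ is the standard basis of $\mathbb Z^n$; (c) the string lengths $\varepsilon_i(T)=\max\{k\ge0: e_i^k(T)\ne0\}$ and $\varphi_i(T)=\max\{k\ge0: f_i^k(T)\ne0\}$ are finite, and $\varphi_i(T)-\varepsilon_i(T)=\mathrm{wt}(T)_i-\mathrm{wt}(T)_{i+1}$. -/
/-! ### Kashiwara `gl_n`-crystals -/

/-- `opIter g k x = g^k(x)` for a partial map `g`, where `none` plays the role of `0`. -/
def opIter {X : Type*} (g : X → Option X) : ℕ → X → Option X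
  | 0, x => some x
  | k + 1, x => (opIter g k x).bind g

/-- `L` is the string length `max {k ≥ 0 : g^k(x) ≠ 0}`; in particular this maximum is finite. -/
def IsStringLength {X : Type*} (g : X → Option X) (x : X) (L : ℕ) : Prop :=
  IsGreatest {k : ℕ | opIter g k x ≠ none} L

/-- The set `B` with the weight map `wt : B → ℤ^n` (coordinates `1, …, n`) and the operators
`e i, f i : B → B ⊔ {0}`, `1 ≤ i ≤ n - 1`, is a `gl_n`-crystal. -/
structure IsGLCrystal (n : ℕ) {X : Type*} (B : Set X) (wt : X → Set.Icc 1 n → ℤ)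
    (e f : ℕ → X → Option X) : Prop where
  e_mem : ∀ i, 1 ≤ i → i < n → ∀ b ∈ B, ∀ c, e i b = some c → c ∈ B
  f_mem : ∀ i, 1 ≤ i → i < n → ∀ b ∈ B, ∀ c, f i b = some c → c ∈ B
  e_iff_f : ∀ i, 1 ≤ i → i < n → ∀ b ∈ B, ∀ c ∈ B, (e i b = some c ↔ f i c = some b)
  wt_e : ∀ i, ∀ h1 : 1 ≤ i, ∀ h2 : i < n, ∀ b ∈ B, ∀ c ∈ B, e i b = some c →
    wt c = wt b + Pi.single (⟨i, h1, h2.le⟩ : Set.Icc 1 n) 1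
      - Pi.single (⟨i + 1, Nat.le_add_left 1 i, h2⟩ : Set.Icc 1 n) 1

/-- A `gl_n`-crystal is seminormal if all string lengths are finite and
`φ_i(b) - ε_i(b) = wt(b)_i - wt(b)_{i+1}`. -/
structure IsSeminormalGLCrystal (n : ℕ) {X : Type*} (B : Set X) (wt : X → Set.Icc 1 n → ℤ)
    (e f : ℕ → X → Option X) : Prop extends IsGLCrystal n B wt e f where
  string : ∀ i, ∀ h1 : 1 ≤ i, ∀ h2 : i < n, ∀ b ∈ B, ∃ eps phi : ℕ,
    IsStringLength (e i) b eps ∧ IsStringLength (f i) b phi ∧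
    (phi : ℤ) - (eps : ℤ) = wt b (⟨i, h1, h2.le⟩ : Set.Icc 1 n)
      - wt b (⟨i + 1, Nat.le_add_left 1 i, h2⟩ : Set.Icc 1 n)

/-! ### Set-valued reverse plane partitions -/

/-- A filling of the quadrant: `T r c` is the set in row `r`, column `c` (0-indexed); the empty
set means that there is no box. -/
abbrev Filling : Type := ℕ → ℕ → Finset ℕ

/-- Box `(r, c)` lies in the skew shape `lam/mu`. -/
def InSkew (lam mu : YoungDiagram) (r c : ℕ) : Prop :=
  (r, c) ∈ lam ∧ (r, c) ∉ mu

/-- `A ≤ B`, that is, `max A ≤ min B` (for nonempty sets). -/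
def SetLE (A B : Finset ℕ) : Prop :=
  ∀ a ∈ A, ∀ b ∈ B, a ≤ b

/-- `T ∈ SVRPP^n(lam/mu)`. -/
structure IsSVRPP (n : ℕ) (lam mu : YoungDiagram) (T : Filling) : Prop where
  outside : ∀ r c, ¬ InSkew lam mu r c → T r c = ∅
  nonempty : ∀ r c, InSkew lam mu r c → (T r c).Nonempty
  letters : ∀ r c, T r c ⊆ Finset.Icc 1 n
  row : ∀ r c, InSkew lam mu r c → InSkew lam mu r (c + 1) → SetLE (T r c) (T r (c + 1))
  col : ∀ r c, InSkew lam mu r c → InSkew lam mu (r + 1) c → SetLE (T r c) (T (r + 1) c)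

/-- The number of columns of `T` containing a set that contains `x`. -/
noncomputable def ircont (T : Filling) (x : ℕ) : ℕ :=
  Set.ncard {c : ℕ | ∃ r, x ∈ T r c}

/-- The weight `(ircont(T)_1, …, ircont(T)_n) ∈ ℤ^n`. -/
noncomputable def wtSVRPP (n : ℕ) (T : Filling) : Set.Icc 1 n → ℤ :=
  fun x => (ircont T x : ℤ)

/-! ### Descent resolution on fillings with letters `a` and `a + 1` -/

/-- Column `c` has at least one box. -/
def ColNonempty (S : Filling) (c : ℕ) : Prop := ∃ r, (S r c).Nonempty

/-- Column `c` is `x`-pure: it has boxes, and all of them are filled with `{x}`. -/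
def ColPure (x : ℕ) (S : Filling) (c : ℕ) : Prop :=
  ColNonempty S c ∧ ∀ r, (S r c).Nonempty → S r c = {x}

/-- Column `c` is mixed: it has boxes, and it is neither `a`-pure nor `(a+1)`-pure. -/
def ColMixed (a : ℕ) (S : Filling) (c : ℕ) : Prop :=
  ColNonempty S c ∧ ¬ ColPure a S c ∧ ¬ ColPure (a + 1) S c

/-- `k` is a descent of `S`: in some row, the box in column `k` has maximum `a + 1` and the box
in column `k + 1` has minimum `a`. -/
def Descent (a : ℕ) (S : Filling) (k : ℕ) : Prop :=
  ∃ r, a + 1 ∈ S r k ∧ a ∈ S r (k + 1)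

/-- The smallest row in which column `c` contains the letter `a + 1`. -/
noncomputable def firstHigh (a : ℕ) (S : Filling) (c : ℕ) : ℕ :=
  sInf {r : ℕ | a + 1 ∈ S r c}

/-- The largest row in which column `c` contains the letter `a`. -/
noncomputable def lastLow (a : ℕ) (S : Filling) (c : ℕ) : ℕ :=
  sSup {r : ℕ | a ∈ S r c}

/-- Refill all boxes of column `c` with `{x}`. -/
def fillPure (x c : ℕ) (S : Filling) : Filling := fun r j =>
  if j = c then (S r j).image (fun _ => x) else S r j

/-- Refill column `c`: `{a}` above row `t`, the set `E` in row `t`, `{a+1}` below row `t`. -/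
def fillMixed (a c t : ℕ) (E : Finset ℕ) (S : Filling) : Filling := fun r j =>
  if j = c ∧ (S r j).Nonempty then
    (if r < t then {a} else if r = t then E else {a + 1})
  else S r j

/-- (M1): column `k` becomes `a`-pure; column `k + 1` becomes mixed, with the transition row and
the transition entry (`{a+1}` or `{a,a+1}`) that column `k` had. -/
noncomputable def resM1 (a : ℕ) (S : Filling) (k : ℕ) : Filling :=
  fillPure a k (fillMixed a (k + 1) (firstHigh a S k) (S (firstHigh a S k) k) S)

/-- (2M): column `k + 1` becomes `(a+1)`-pure; column `k` becomes mixed, with the transition row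
and the transition entry (`{a}` or `{a,a+1}`) that column `k + 1` had. -/
noncomputable def res2M (a : ℕ) (S : Filling) (k : ℕ) : Filling :=
  fillPure (a + 1) (k + 1)
    (fillMixed a k (lastLow a S (k + 1)) (S (lastLow a S (k + 1)) (k + 1)) S)

/-- (21): column `k` becomes `a`-pure and column `k + 1` becomes `(a+1)`-pure. -/
def res21 (a : ℕ) (S : Filling) (k : ℕ) : Filling :=
  fillPure a k (fillPure (a + 1) (k + 1) S)

/-- One descent-resolution step. -/
inductive ResStep (a : ℕ) (S : Filling) : Filling → Prop
  | m1 (k : ℕ) : Descent a S k → ColMixed a S k → ColPure a S (k + 1) →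
      ResStep a S (resM1 a S k)
  | twoM (k : ℕ) : Descent a S k → ColPure (a + 1) S k → ColMixed a S (k + 1) →
      ResStep a S (res2M a S k)
  | twoOne (k : ℕ) : Descent a S k → ColPure (a + 1) S k → ColPure a S (k + 1) →
      ResStep a S (res21 a S k)

/-- `N` is a possible outcome of the descent-resolution algorithm applied to `S`: it is reached
by finitely many steps, and it has no descent. -/
def IsNormOf (a : ℕ) (S N : Filling) : Prop :=
  Relation.ReflTransGen (ResStep a) S N ∧ ∀ k, ¬ Descent a N k

open Classical in
/-- The outcome `norm(S)` of the descent-resolution algorithm (`S` itself if there is none). -/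
noncomputable def norm12 (a : ℕ) (S : Filling) : Filling :=
  if h : ∃ N, IsNormOf a S N then h.choose else S

/-! ### Signatures and the operators `e_i`, `f_i` -/

/-- The restriction `T^{(i)}` of `T` to the letters `i, i+1`. -/
def restrictTwo (i : ℕ) (T : Filling) : Filling := fun r c => T r c ∩ {i, i + 1}

/-- `T` with `T^{(i)}` replaced by `S`. -/
def replaceTwo (i : ℕ) (T S : Filling) : Filling := fun r c => (T r c \ {i, i + 1}) ∪ S r c

inductive Sgn : Type
  | plus
  | minus

open Classical in
/-- The sign over column `c` of `T^{(i)}`, if any. -/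
noncomputable def colSign (i : ℕ) (T : Filling) (c : ℕ) : Option Sgn :=
  if ColPure i (restrictTwo i T) c then some Sgn.plus
  else if ColPure (i + 1) (restrictTwo i T) c then some Sgn.minus
  else none

/-- The `i`-signature of a filling `T` with at most `m` columns, from left to right; each sign is
recorded together with its column. -/
noncomputable def signature (m i : ℕ) (T : Filling) : List (Sgn × ℕ) :=
  (List.range m).filterMap fun c => (colSign i T c).map fun s => (s, c)

/-- Put a sign in front of a reduced word; a `-` in front of a `+` cancels with it. -/
def consCancel : Sgn × ℕ → List (Sgn × ℕ) → List (Sgn × ℕ)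
  | (Sgn.minus, _), (Sgn.plus, _) :: w => w
  | x, w => x :: w

/-- The reduced word `+⋯+-⋯-` obtained by successively cancelling `-` immediately followed
by `+`. -/
def reduceWord (w : List (Sgn × ℕ)) : List (Sgn × ℕ) := w.foldr consCancel []

/-- The column of the leftmost `-` of a word. -/
def leftmostMinus : List (Sgn × ℕ) → Option ℕ
  | [] => none
  | (Sgn.minus, c) :: _ => some c
  | (Sgn.plus, _) :: w => leftmostMinus w

/-- The column of the rightmost `+` of a word. -/
def rightmostPlus : List (Sgn × ℕ) → Option ℕ
  | [] => none
  | (Sgn.minus, _) :: w => rightmostPlus w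
  | (Sgn.plus, c) :: w =>
    match rightmostPlus w with
    | some c' => some c'
    | none => some c

/-- The column on which `e_i` acts, for a filling `T` of a shape contained in `lam`. -/
noncomputable def eColumn (lam : YoungDiagram) (i : ℕ) (T : Filling) : Option ℕ :=
  leftmostMinus (reduceWord (signature (lam.rowLen 0) i T))

/-- The column on which `f_i` acts, for a filling `T` of a shape contained in `lam`. -/
noncomputable def fColumn (lam : YoungDiagram) (i : ℕ) (T : Filling) : Option ℕ :=
  rightmostPlus (reduceWord (signature (lam.rowLen 0) i T))

/-- `T^{(i)}` with the entries of column `A` all replaced by `{i}`. -/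
def eStart (i : ℕ) (T : Filling) (A : ℕ) : Filling := fillPure i A (restrictTwo i T)

/-- `T^{(i)}` with the entries of column `A` all replaced by `{i+1}`. -/
def fStart (i : ℕ) (T : Filling) (A : ℕ) : Filling := fillPure (i + 1) A (restrictTwo i T)

/-- The raising operator `e_i` (`none` plays the role of `0`). -/
noncomputable def eOp (lam : YoungDiagram) (i : ℕ) (T : Filling) : Option Filling :=
  (eColumn lam i T).map fun A => replaceTwo i T (norm12 i (eStart i T A))

/-- The lowering operator `f_i` (`none` plays the role of `0`). -/
noncomputable def fOp (lam : YoungDiagram) (i : ℕ) (T : Filling) : Option Filling :=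
  (fColumn lam i T).map fun A => replaceTwo i T (norm12 i (fStart i T A))

/-!
Refilling by `i` the `(i+1)`-pure column on which `e_i` acts can create a descent only immediately
to its left, and the neighbour must be mixed there: if it were `(i+1)`-pure, it would carry an
uncancelled `-` to the left of the leftmost one. So the only possible resolution step is of type
(M1). It exchanges the pure column with its mixed left neighbour and leads back to the same
situation, so the run is a single forced chain of exchanges. Reading the chain backwards with the
moving pure column refilled by `i + 1`, every step becomes a step (2M), and the chain becomes the
run of the algorithm for `f_i`. This makes `e_i` and `f_i` mutually inverse.

Mixed columns carry no sign, so an exchange does not change the words on either side of the moving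
column: `e_i` turns a signature `u - v` into `u + v`, where `u` has no uncancelled `-` and `v` has
no uncancelled `+`. The string lengths are therefore the numbers of uncancelled signs.
Cancellation preserves the difference between the numbers of `+` and of `-`, and this difference
is the one between the numbers of columns containing `i` and `i + 1`, because a column of
`T^{(i)}` avoids `i` exactly if it carries a `-` and avoids `i + 1` exactly if it carries a `+`.
-/

/-! ### Reduced sign words -/

instance : DecidableEq Sgn
  | .plus, .plus | .minus, .minus => isTrue rfl
  | .plus, .minus | .minus, .plus => isFalse nofun

/-- The number of signs `s` in a word. -/
def signCount (s : Sgn) (w : List (Sgn × ℕ)) : ℕ := (w.map Prod.fst).count s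

/-- The number of signs `s` that survive in the reduced word. -/
def uncancelled (s : Sgn) (w : List (Sgn × ℕ)) : ℕ := signCount s (reduceWord w)

section Words

variable {s : Sgn} {c A : ℕ} {x : Sgn × ℕ} {u v w p q : List (Sgn × ℕ)}

@[simp] theorem signCount_nil : signCount s [] = 0 := rfl

@[simp] theorem signCount_cons :
    signCount s (x :: w) = signCount s w + if x.1 = s then 1 else 0 := by
  simp [signCount, List.count_cons]

@[simp] theorem signCount_append : signCount s (u ++ v) = signCount s u + signCount s v := by
  simp [signCount]

theorem signCount_eq_zero_iff : signCount s w = 0 ↔ ∀ x ∈ w, x.1 ≠ s := by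
  simp only [signCount, List.count_eq_zero, List.mem_map, not_exists, not_and, ne_eq]

@[simp] theorem reduceWord_nil : reduceWord [] = [] := rfl

theorem reduceWord_cons : reduceWord (x :: w) = consCancel x (reduceWord w) := rfl

@[simp] theorem consCancel_plus : consCancel (.plus, c) w = (.plus, c) :: w := by
  simp [consCancel]

theorem consCancel_of_signCount_plus_eq_zero (hw : signCount .plus w = 0) :
    consCancel x w = x :: w := by
  rcases x with ⟨_ | _, c⟩
  · exact consCancel_plus
  · rcases w with _ | ⟨⟨_ | _, d⟩, w⟩ <;> simp_all [consCancel]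

theorem reduceWord_append (hu : uncancelled .minus u = 0) :
    reduceWord (u ++ v) = reduceWord u ++ reduceWord v := by
  induction u with
  | nil => rfl
  | cons x u ih =>
    rw [uncancelled, reduceWord_cons] at hu
    rw [List.cons_append, reduceWord_cons, reduceWord_cons]
    rcases x with ⟨_ | _, c⟩ <;> rcases h : reduceWord u with _ | ⟨⟨_ | _, d⟩, z⟩ <;>
      simp_all [uncancelled, consCancel]

theorem reduceWord_append_cons (hu : uncancelled .minus u = 0) (hv : uncancelled .plus v = 0) :
    reduceWord (u ++ x :: v) = reduceWord u ++ x :: reduceWord v := by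
  rw [reduceWord_append hu, reduceWord_cons, consCancel_of_signCount_plus_eq_zero hv]

theorem exists_eq_append_cons_of_reduceWord_eq (hp : signCount .minus p = 0)
    (h : reduceWord w = p ++ x :: q) :
    ∃ u v, w = u ++ x :: v ∧ reduceWord u = p ∧ reduceWord v = q := by
  induction w generalizing p with
  | nil => simp at h
  | cons y w ih =>
    rw [reduceWord_cons] at h
    rcases y with ⟨_ | _, d⟩
    · rw [consCancel_plus] at h
      rcases p with _ | ⟨z, p⟩
      · obtain ⟨rfl, rfl⟩ := List.cons_eq_cons.1 h
        exact ⟨[], w, rfl, rfl, rfl⟩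
      · obtain ⟨rfl, e⟩ := List.cons_eq_cons.1 h
        obtain ⟨u, v, rfl, rfl, rfl⟩ := ih (by simpa using hp) e
        exact ⟨(.plus, d) :: u, v, rfl, by rw [reduceWord_cons, consCancel_plus], rfl⟩
    · by_cases hw : ∃ c z, reduceWord w = (.plus, c) :: z
      · obtain ⟨c, z, e⟩ := hw
        rw [e] at h
        obtain ⟨u, v, rfl, hu, rfl⟩ := ih (p := (.plus, c) :: p) (by simpa using hp)
          (e.trans (congrArg _ h))
        exact ⟨(.minus, d) :: u, v, rfl, by rw [reduceWord_cons, hu]; rfl, rfl⟩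
      · have e : consCancel (.minus, d) (reduceWord w) = (.minus, d) :: reduceWord w := by
          rcases hr : reduceWord w with _ | ⟨⟨_ | _, f⟩, z⟩ <;> simp_all [consCancel]
        rw [e] at h
        rcases p with _ | ⟨z, p⟩
        · obtain ⟨rfl, rfl⟩ := List.cons_eq_cons.1 h
          exact ⟨[], w, rfl, rfl, rfl⟩
        · obtain ⟨rfl, -⟩ := List.cons_eq_cons.1 h
          simp at hp

theorem pairwise_consCancel (hw : w.Pairwise fun x y => x.1 = .minus → y.1 = .minus) :
    (consCancel x w).Pairwise fun x y => x.1 = .minus → y.1 = .minus := by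
  rcases x with ⟨_ | _, c⟩
  · exact consCancel_plus ▸ .cons (fun _ _ h => nomatch h) hw
  · rcases w with _ | ⟨⟨_ | _, d⟩, z⟩
    · exact List.pairwise_singleton _ _
    · exact hw.of_cons
    · refine .cons (fun y hy _ => ?_) hw
      rcases List.mem_cons.1 hy with rfl | hy
      exacts [rfl, List.rel_of_pairwise_cons hw hy rfl]

theorem pairwise_reduceWord (w : List (Sgn × ℕ)) :
    (reduceWord w).Pairwise fun x y => x.1 = .minus → y.1 = .minus := by
  induction w with
  | nil => exact .nil
  | cons x w ih => exact pairwise_consCancel ih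

theorem leftmostMinus_eq_none_iff : leftmostMinus w = none ↔ signCount .minus w = 0 := by
  induction w with
  | nil => simp [leftmostMinus]
  | cons x w ih => rcases x with ⟨_ | _, d⟩ <;> simp [leftmostMinus, ih]

theorem rightmostPlus_eq_none_iff : rightmostPlus w = none ↔ signCount .plus w = 0 := by
  induction w with
  | nil => simp [rightmostPlus]
  | cons x w ih =>
    rcases x with ⟨_ | _, d⟩ <;> cases h : rightmostPlus w <;> simp_all [rightmostPlus]

theorem leftmostMinus_eq_some_iff : leftmostMinus w = some A ↔
    ∃ p q, w = p ++ (.minus, A) :: q ∧ signCount .minus p = 0 := by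
  constructor
  · induction w with
    | nil => simp [leftmostMinus]
    | cons x w ih =>
      rcases x with ⟨_ | _, d⟩ <;> intro h
      · obtain ⟨p, q, rfl, hp⟩ := ih h
        exact ⟨(.plus, d) :: p, q, rfl, by simpa using hp⟩
      · obtain rfl : d = A := by simpa [leftmostMinus] using h
        exact ⟨[], w, rfl, rfl⟩
  · rintro ⟨p, q, rfl, hp⟩
    induction p with
    | nil => rfl
    | cons x p ih => rcases x with ⟨_ | _, d⟩ <;> simp_all [leftmostMinus]

theorem rightmostPlus_eq_some_iff : rightmostPlus w = some A ↔
    ∃ p q, w = p ++ (.plus, A) :: q ∧ signCount .plus q = 0 := by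
  constructor
  · induction w with
    | nil => simp [rightmostPlus]
    | cons x w ih =>
      cases hr : rightmostPlus w with
      | none =>
        rcases x with ⟨_ | _, d⟩ <;> intro h <;> simp only [rightmostPlus, hr] at h
        · obtain rfl : d = A := Option.some.inj h
          exact ⟨[], w, rfl, rightmostPlus_eq_none_iff.1 hr⟩
        · cases h
      | some B =>
        intro h
        obtain ⟨p, q, rfl, hq⟩ := ih (by rcases x with ⟨_ | _, d⟩ <;> simp_all [rightmostPlus])
        exact ⟨x :: p, q, rfl, hq⟩
  · rintro ⟨p, q, rfl, hq⟩
    induction p with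
    | nil => simp [rightmostPlus, rightmostPlus_eq_none_iff.2 hq]
    | cons x p ih => rcases x with ⟨_ | _, d⟩ <;> simp_all [rightmostPlus]

theorem leftmostMinus_reduceWord_eq_some_iff : leftmostMinus (reduceWord w) = some A ↔
    ∃ u v, w = u ++ (.minus, A) :: v ∧ uncancelled .minus u = 0 ∧ uncancelled .plus v = 0 := by
  rw [leftmostMinus_eq_some_iff]
  constructor
  · rintro ⟨p, q, h, hp⟩
    have hpw := (List.pairwise_append.1 (h ▸ pairwise_reduceWord w)).2.1
    have hq : signCount .plus q = 0 := signCount_eq_zero_iff.2 fun x hx => by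
      simp [(List.pairwise_cons.1 hpw).1 x hx rfl]
    obtain ⟨u, v, rfl, rfl, rfl⟩ := exists_eq_append_cons_of_reduceWord_eq hp h
    exact ⟨u, v, rfl, hp, hq⟩
  · rintro ⟨u, v, rfl, hu, hv⟩
    exact ⟨_, _, reduceWord_append_cons hu hv, hu⟩

theorem rightmostPlus_reduceWord_eq_some_iff : rightmostPlus (reduceWord w) = some A ↔
    ∃ u v, w = u ++ (.plus, A) :: v ∧ uncancelled .minus u = 0 ∧ uncancelled .plus v = 0 := by
  rw [rightmostPlus_eq_some_iff]
  constructor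
  · rintro ⟨p, q, h, hq⟩
    have hpw := (List.pairwise_append.1 (h ▸ pairwise_reduceWord w)).2.2
    have hp : signCount .minus p = 0 := signCount_eq_zero_iff.2 fun x hx hm => by
      simpa using hpw x hx _ List.mem_cons_self hm
    obtain ⟨u, v, rfl, rfl, rfl⟩ := exists_eq_append_cons_of_reduceWord_eq hp h
    exact ⟨u, v, rfl, hp, hq⟩
  · rintro ⟨u, v, rfl, hu, hv⟩
    exact ⟨_, _, reduceWord_append_cons hu hv, hv⟩

theorem uncancelled_minus_le_append : uncancelled .minus v ≤ uncancelled .minus (u ++ v) := by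
  induction u with
  | nil => rfl
  | cons x u ih =>
    refine ih.trans ?_
    rw [List.cons_append, uncancelled, uncancelled, reduceWord_cons]
    rcases x with ⟨_ | _, c⟩ <;> rcases reduceWord (u ++ v) with _ | ⟨⟨_ | _, d⟩, z⟩ <;>
      simp [consCancel]

theorem uncancelled_plus_cons_pos : 0 < uncancelled .plus ((.plus, c) :: w) := by
  simp [uncancelled, reduceWord_cons]

theorem uncancelled_plus_add_signCount_minus (w : List (Sgn × ℕ)) :
    uncancelled .plus w + signCount .minus w = uncancelled .minus w + signCount .plus w := by
  induction w with
  | nil => rfl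
  | cons x w ih =>
    rw [uncancelled, uncancelled, reduceWord_cons]
    rcases x with ⟨_ | _, d⟩ <;> rcases h : reduceWord w with _ | ⟨⟨_ | _, e⟩, v⟩ <;>
      simp_all [uncancelled, consCancel] <;> lia

end Words

/-! ### String lengths -/

section StringLength

variable {X : Type*} {g : X → Option X} {B : Set X} {ν : X → ℕ}

theorem opIter_eq_some_add (hg : ∀ b ∈ B, ∀ c, g b = some c → c ∈ B ∧ ν b = ν c + 1) {b : X}
    (hb : b ∈ B) {k : ℕ} {c : X} (h : opIter g k b = some c) : c ∈ B ∧ ν b = ν c + k := by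
  induction k generalizing c with
  | zero =>
    obtain rfl := Option.some.inj h
    exact ⟨hb, rfl⟩
  | succ k ih =>
    obtain ⟨d, hd, hdc⟩ := Option.bind_eq_some_iff.1 h
    obtain ⟨hdB, hbd⟩ := ih hd
    obtain ⟨hc, hdc⟩ := hg d hdB c hdc
    exact ⟨hc, by lia⟩

theorem isStringLength_of_drop (h0 : ∀ b ∈ B, g b = none ↔ ν b = 0)
    (hg : ∀ b ∈ B, ∀ c, g b = some c → c ∈ B ∧ ν b = ν c + 1) {b : X} (hb : b ∈ B) :
    IsStringLength g b (ν b) := by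
  have hle : ∀ k, opIter g k b ≠ none → k ≤ ν b := fun k hk => by
    obtain ⟨c, hc⟩ := Option.ne_none_iff_exists'.1 hk
    have := (opIter_eq_some_add hg hb hc).2
    lia
  have hne : ∀ k ≤ ν b, opIter g k b ≠ none := fun k => by
    induction k with
    | zero => simp [opIter]
    | succ k ih =>
      intro hk
      obtain ⟨c, hc⟩ := Option.ne_none_iff_exists'.1 (ih (by lia))
      obtain ⟨hcB, hbc⟩ := opIter_eq_some_add hg hb hc
      rw [opIter, hc, Option.bind_some, Ne, h0 c hcB]
      lia
  exact ⟨hne _ le_rfl, hle⟩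

end StringLength

/-! ### Two-letter fillings -/

section Refill

variable {x y c j r : ℕ} {S S' : Filling}

theorem fillPure_of_ne (hj : j ≠ c) : fillPure x c S r j = S r j := if_neg hj

theorem nonempty_fillPure : (fillPure x c S r j).Nonempty ↔ (S r j).Nonempty := by
  unfold fillPure
  split_ifs <;> simp

theorem fillPure_fillPure : fillPure x c (fillPure y c S) = fillPure x c S := by
  funext r j
  unfold fillPure
  split_ifs
  · rw [Finset.image_image]
    rfl
  · rfl

theorem fillPure_self (h : (S r c).Nonempty) : fillPure x c S r c = {x} := by
  rw [fillPure, if_pos rfl, Finset.image_const h]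

theorem colPure_fillPure (h : ColNonempty S c) : ColPure x (fillPure x c S) c :=
  ⟨h.imp fun _ => nonempty_fillPure.2, fun _ hr => fillPure_self (nonempty_fillPure.1 hr)⟩

theorem ColPure.fillPure_eq_self (h : ColPure x S c) : fillPure x c S = S := by
  funext r j
  rcases ne_or_eq j c with hj | rfl
  · exact fillPure_of_ne hj
  · rcases (S r j).eq_empty_or_nonempty with he | hne
    · simp [fillPure, he]
    · rw [fillPure_self hne, h.2 r hne]

theorem ColPure.eq_of_mem (h : ColPure x S c) (hy : y ∈ S r c) : y = x := by
  rw [h.2 r ⟨y, hy⟩] at hy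
  exact Finset.mem_singleton.1 hy

theorem colPure_congr (h : ∀ r, S r c = S' r c) : ColPure x S c ↔ ColPure x S' c := by
  simp only [ColPure, ColNonempty, h]

theorem colMixed_congr (h : ∀ r, S r c = S' r c) : ColMixed x S c ↔ ColMixed x S' c := by
  simp only [ColMixed, ColNonempty, colPure_congr h, h]

theorem fillMixed_of_ne {a t : ℕ} {E : Finset ℕ} (hj : j ≠ c) : fillMixed a c t E S r j = S r j :=
  if_neg fun h => hj h.1

theorem fillMixed_self {a t : ℕ} {E : Finset ℕ} (h : (S r c).Nonempty) :
    fillMixed a c t E S r c = if r < t then {a} else if r = t then E else {a + 1} :=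
  if_pos ⟨rfl, h⟩

end Refill

theorem high_mem_firstHigh {a c : ℕ} {S : Filling} (hc : ∃ r, a + 1 ∈ S r c) :
    a + 1 ∈ S (firstHigh a S c) c :=
  Nat.sInf_mem (s := {r | a + 1 ∈ S r c}) hc

/-- `S` fills the boxes of the finite skew shape `D` (a set of pairs (row, column)) with nonempty
subsets of `{a, a + 1}` that weakly increase down columns. Being a skew shape is encoded as order
convexity in `ℕ × ℕ`. -/
structure IsTwoFilling (a : ℕ) (D : Set (ℕ × ℕ)) (S : Filling) : Prop where
  ordConnected : D.OrdConnected
  finite : D.Finite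
  nonempty_iff : ∀ {r c}, (S r c).Nonempty ↔ (r, c) ∈ D
  subset : ∀ {r c}, S r c ⊆ {a, a + 1}
  col : ∀ {r r' c}, r < r' → a + 1 ∈ S r c → a ∉ S r' c

namespace IsTwoFilling

variable {a c k r x : ℕ} {D : Set (ℕ × ℕ)} {S S' : Filling}

theorem mem_shape (h : IsTwoFilling a D S) (hx : x ∈ S r c) : (r, c) ∈ D :=
  h.nonempty_iff.1 ⟨x, hx⟩

theorem mem_shape_of_le (h : IsTwoFilling a D S) {r₁ c₁ r₂ c₂ : ℕ} (h₁ : (r₁, c₁) ∈ D)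
    (h₂ : (r₂, c₂) ∈ D) (hr₁ : r₁ ≤ r) (hr₂ : r ≤ r₂) (hc₁ : c₁ ≤ c) (hc₂ : c ≤ c₂) :
    (r, c) ∈ D :=
  h.ordConnected.out h₁ h₂ ⟨⟨hr₁, hc₁⟩, hr₂, hc₂⟩

theorem eq_or_eq_of_mem (h : IsTwoFilling a D S) (hx : x ∈ S r c) : x = a ∨ x = a + 1 := by
  simpa using h.subset hx

theorem ext (h : IsTwoFilling a D S) (h' : IsTwoFilling a D S')
    (hS : ∀ r c, (r, c) ∈ D → S r c = S' r c) : S = S' := by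
  funext r c
  by_cases hD : (r, c) ∈ D
  · exact hS r c hD
  · rw [Finset.not_nonempty_iff_eq_empty.1 (h.nonempty_iff.not.2 hD),
      Finset.not_nonempty_iff_eq_empty.1 (h'.nonempty_iff.not.2 hD)]

theorem eq_low (h : IsTwoFilling a D S) (hD : (r, c) ∈ D) (hx : a + 1 ∉ S r c) : S r c = {a} :=
  Finset.eq_singleton_iff_nonempty_unique_mem.2 ⟨h.nonempty_iff.2 hD, fun _ hy =>
    (h.eq_or_eq_of_mem hy).resolve_right fun e => hx (e ▸ hy)⟩

theorem eq_high (h : IsTwoFilling a D S) (hD : (r, c) ∈ D) (hx : a ∉ S r c) : S r c = {a + 1} :=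
  Finset.eq_singleton_iff_nonempty_unique_mem.2 ⟨h.nonempty_iff.2 hD, fun _ hy =>
    (h.eq_or_eq_of_mem hy).resolve_left fun e => hx (e ▸ hy)⟩

theorem eq_of_colPure (h : IsTwoFilling a D S) (hp : ColPure x S c) (hD : (r, c) ∈ D) :
    S r c = {x} :=
  hp.2 r (h.nonempty_iff.2 hD)

theorem exists_low_of_not_colPure (h : IsTwoFilling a D S) (hc : ColNonempty S c)
    (hp : ¬ ColPure (a + 1) S c) : ∃ r, a ∈ S r c := by
  contrapose! hp
  exact ⟨hc, fun r hr => h.eq_high (h.nonempty_iff.1 hr) (hp r)⟩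

theorem exists_high_of_not_colPure (h : IsTwoFilling a D S) (hc : ColNonempty S c)
    (hp : ¬ ColPure a S c) : ∃ r, a + 1 ∈ S r c := by
  contrapose! hp
  exact ⟨hc, fun r hr => h.eq_low (h.nonempty_iff.1 hr) (hp r)⟩

theorem colMixed_iff (h : IsTwoFilling a D S) :
    ColMixed a S c ↔ (∃ r, a ∈ S r c) ∧ ∃ r, a + 1 ∈ S r c := by
  constructor
  · rintro ⟨hc, hlow, hhigh⟩
    exact ⟨h.exists_low_of_not_colPure hc hhigh, h.exists_high_of_not_colPure hc hlow⟩
  · rintro ⟨⟨r, hr⟩, s, hs⟩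
    exact ⟨⟨r, a, hr⟩, fun hp => absurd (hp.eq_of_mem hs) (by lia),
      fun hp => absurd (hp.eq_of_mem hr) (by lia)⟩

theorem restrictTwo_eq (h : IsTwoFilling a D S) : restrictTwo a S = S :=
  funext₂ fun _ _ => Finset.inter_eq_left.2 h.subset

theorem fillPure (h : IsTwoFilling a D S) (hx : x = a ∨ x = a + 1) :
    IsTwoFilling a D (fillPure x c S) where
  ordConnected := h.ordConnected
  finite := h.finite
  nonempty_iff := nonempty_fillPure.trans h.nonempty_iff
  subset {r j} := by
    rcases ne_or_eq j c with hj | rfl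
    · rw [fillPure_of_ne hj]
      exact h.subset
    · rw [_root_.fillPure, if_pos rfl]
      intro y hy
      obtain ⟨-, -, rfl⟩ := Finset.mem_image.1 hy
      simpa using hx
  col {r r' j} hr hm hm' := by
    rcases ne_or_eq j c with hj | rfl
    · rw [fillPure_of_ne hj] at hm hm'
      exact h.col hr hm hm'
    · have hp := colPure_fillPure (x := x) ⟨r, nonempty_fillPure.1 ⟨_, hm⟩⟩
      have := (hp.eq_of_mem hm).trans (hp.eq_of_mem hm').symm
      lia

theorem fillMixed {t : ℕ} {E : Finset ℕ} (h : IsTwoFilling a D S) (hE : E ⊆ {a, a + 1})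
    (hne : E.Nonempty) : IsTwoFilling a D (fillMixed a c t E S) where
  ordConnected := h.ordConnected
  finite := h.finite
  nonempty_iff {r j} := by
    rw [← h.nonempty_iff, _root_.fillMixed]
    by_cases hj : j = c ∧ (S r j).Nonempty
    · rw [if_pos hj]
      split_ifs <;> simp [hj.2, hne]
    · rw [if_neg hj]
  subset {r j} := by
    unfold _root_.fillMixed
    split_ifs <;> simp [hE, h.subset]
  col {r r' j} hr hm hm' := by
    have := @h.col r r' j hr
    unfold _root_.fillMixed at hm hm'
    split_ifs at hm hm' <;> simp_all <;> lia

theorem eq_ite_firstHigh (h : IsTwoFilling a D S) (hc : ∃ r, a + 1 ∈ S r c) (hD : (r, c) ∈ D) :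
    S r c = if r < firstHigh a S c then {a}
      else if r = firstHigh a S c then S (firstHigh a S c) c else {a + 1} := by
  split_ifs with hlt heq
  · exact h.eq_low hD fun hr => (Nat.sInf_le (s := {r | a + 1 ∈ S r c}) hr).not_gt hlt
  · rw [← heq]
  · exact h.eq_high hD (h.col (by lia) (high_mem_firstHigh hc))

theorem bddAbove_low (h : IsTwoFilling a D S) : BddAbove {r | a ∈ S r c} :=
  ((h.finite.image Prod.fst).subset fun r hr => ⟨(r, c), h.mem_shape hr, rfl⟩).bddAbove

theorem low_mem_lastLow (h : IsTwoFilling a D S) (hc : ∃ r, a ∈ S r c) :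
    a ∈ S (lastLow a S c) c :=
  Nat.sSup_mem (s := {r | a ∈ S r c}) hc h.bddAbove_low

theorem eq_ite_lastLow (h : IsTwoFilling a D S) (hc : ∃ r, a ∈ S r c) (hD : (r, c) ∈ D) :
    S r c = if r < lastLow a S c then {a}
      else if r = lastLow a S c then S (lastLow a S c) c else {a + 1} := by
  split_ifs with hlt heq
  · exact h.eq_low hD fun hr => h.col hlt hr (h.low_mem_lastLow hc)
  · rw [← heq]
  · exact h.eq_high hD fun hr => heq ((le_csSup h.bddAbove_low hr).antisymm (not_lt.1 hlt))

end IsTwoFilling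

section ColSign

variable {i c : ℕ} {T : Filling}

theorem not_colPure_succ_of_colPure {x : ℕ} {S : Filling} (h : ColPure x S c) :
    ¬ ColPure (x + 1) S c := fun h' => by
  obtain ⟨r, y, hy⟩ := h.1
  have := (h.eq_of_mem hy).symm.trans (h'.eq_of_mem hy)
  lia

theorem colSign_eq_plus_iff : colSign i T c = some .plus ↔ ColPure i (restrictTwo i T) c := by
  unfold colSign
  split_ifs <;> simp_all

theorem colSign_eq_minus_iff :
    colSign i T c = some .minus ↔ ColPure (i + 1) (restrictTwo i T) c := by
  unfold colSign
  split_ifs with h <;> simp_all [not_colPure_succ_of_colPure]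

end ColSign

/-! ### Exchanging a mixed column with a pure one -/

/-- The fillings `U` and `U'` of `D` differ in the columns `k` and `k + 1` only, which are mixed and
`a`-pure in `U`, and `a`-pure and mixed in `U'`. The mixed column is the same in the rows shared by
the two columns, and each of the letters `a`, `a + 1` occurs there in a shared row. Then
(M1) turns `U` into `U'`, and (2M) turns `U'` into `U` once the pure column is refilled with
`a + 1`. -/
structure Exchange (a : ℕ) (D : Set (ℕ × ℕ)) (k : ℕ) (U U' : Filling) : Prop where
  left : IsTwoFilling a D U
  right : IsTwoFilling a D U'
  agree : ∀ {r c}, c ≠ k → c ≠ k + 1 → U r c = U' r c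
  left_pure : ColPure a U (k + 1)
  right_pure : ColPure a U' k
  common : ∀ {r}, (r, k) ∈ D → (r, k + 1) ∈ D → U r k = U' r (k + 1)
  exists_low : ∃ r, (r, k) ∈ D ∧ a ∈ U' r (k + 1)
  exists_high : ∃ r, a + 1 ∈ U r k ∧ (r, k + 1) ∈ D

namespace Exchange

variable {a k r : ℕ} {D : Set (ℕ × ℕ)} {U U' V : Filling}

theorem mem_left_of_high (h : Exchange a D k U U') (hr : a + 1 ∈ U' r (k + 1)) : (r, k) ∈ D := by
  obtain ⟨x, hxD, hx⟩ := h.exists_low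
  have hxr : x ≤ r := not_lt.1 fun hlt => h.right.col hlt hr hx
  exact h.left.mem_shape_of_le hxD (h.right.mem_shape hr) hxr le_rfl le_rfl (by lia)

theorem mem_right_of_low (h : Exchange a D k U U') (hr : a ∈ U r k) : (r, k + 1) ∈ D := by
  obtain ⟨y, hy, hyD⟩ := h.exists_high
  have hry : r ≤ y := not_lt.1 fun hlt => h.left.col hlt hy hr
  exact h.left.mem_shape_of_le (h.left.mem_shape hr) hyD le_rfl hry (by lia) le_rfl

theorem right_unique (h : Exchange a D k U U') (h' : Exchange a D k U V) : U' = V := by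
  refine h.right.ext h'.right fun r c hD => ?_
  by_cases hk : c = k
  · subst hk
    rw [h.right.eq_of_colPure h.right_pure hD, h'.right.eq_of_colPure h'.right_pure hD]
  by_cases hk' : c = k + 1
  · subst hk'
    by_cases hr : (r, k) ∈ D
    · rw [← h.common hr hD, h'.common hr hD]
    · rw [h.right.eq_low hD (hr ∘ h.mem_left_of_high),
        h'.right.eq_low hD (hr ∘ h'.mem_left_of_high)]
  · rw [← h.agree hk hk', h'.agree hk hk']

theorem left_unique (h : Exchange a D k U U') (h' : Exchange a D k V U') : U = V := by
  refine h.left.ext h'.left fun r c hD => ?_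
  by_cases hk : c = k
  · subst hk
    by_cases hr : (r, c + 1) ∈ D
    · rw [h.common hD hr, h'.common hD hr]
    · rw [h.left.eq_high hD (hr ∘ h.mem_right_of_low),
        h'.left.eq_high hD (hr ∘ h'.mem_right_of_low)]
  by_cases hk' : c = k + 1
  · subst hk'
    rw [h.left.eq_of_colPure h.left_pure hD, h'.left.eq_of_colPure h'.left_pure hD]
  · rw [h.agree hk hk', h'.agree hk hk']

end Exchange

section Resolution

variable {a k : ℕ} {D : Set (ℕ × ℕ)} {U U' V : Filling}

theorem exchange_resM1 (h : IsTwoFilling a D U) (hd : Descent a U k)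
    (hm : ColMixed a U k) (hp : ColPure a U (k + 1)) : Exchange a D k U (resM1 a U k) := by
  obtain ⟨⟨x, hx⟩, hhigh⟩ := h.colMixed_iff.1 hm
  obtain ⟨y, hy, hy'⟩ := hd
  have hxy : x ≤ y := not_lt.1 fun hlt => h.col hlt hy hx
  have hxD : (x, k + 1) ∈ D := h.mem_shape_of_le (h.mem_shape hx) (h.mem_shape hy') le_rfl hxy
    (by lia) le_rfl
  have common : ∀ {r}, (r, k) ∈ D → (r, k + 1) ∈ D → U r k = resM1 a U k r (k + 1) := by
    intro r hr hr'
    rw [h.eq_ite_firstHigh hhigh hr, resM1, fillPure_of_ne (by lia),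
      fillMixed_self (h.nonempty_iff.2 hr')]
  refine ⟨h, (h.fillMixed h.subset ⟨_, high_mem_firstHigh hhigh⟩).fillPure (Or.inl rfl),
    fun hc hc' => ?_, hp, ?_, common,
    ⟨x, h.mem_shape hx, common (h.mem_shape hx) hxD ▸ hx⟩, ⟨y, hy, h.mem_shape hy'⟩⟩
  · rw [resM1, fillPure_of_ne hc, fillMixed_of_ne hc']
  · exact colPure_fillPure ⟨x, by rw [fillMixed_of_ne (by lia)]; exact ⟨a, hx⟩⟩

theorem exchange_res2M (h : IsTwoFilling a D V) (hd : Descent a V k)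
    (hp : ColPure (a + 1) V k) (hm : ColMixed a V (k + 1)) :
    Exchange a D k (fillPure a (k + 1) (res2M a V k)) (fillPure a k V) := by
  obtain ⟨hlow, ⟨y, hy⟩⟩ := h.colMixed_iff.1 hm
  obtain ⟨x, hx, hx'⟩ := hd
  have hxy : x ≤ y := not_lt.1 fun hlt => h.col hlt hy hx'
  have hyD : (y, k) ∈ D := h.mem_shape_of_le (h.mem_shape hx) (h.mem_shape hy) hxy le_rfl
    le_rfl (by lia)
  have hW : IsTwoFilling a D (res2M a V k) :=
    (h.fillMixed h.subset ⟨_, h.low_mem_lastLow hlow⟩).fillPure (Or.inr rfl)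
  have common : ∀ {r}, (r, k) ∈ D → (r, k + 1) ∈ D →
      fillPure a (k + 1) (res2M a V k) r k = fillPure a k V r (k + 1) := by
    intro r hr hr'
    rw [fillPure_of_ne (by lia), fillPure_of_ne (by lia), h.eq_ite_lastLow hlow hr', res2M,
      fillPure_of_ne (by lia), fillMixed_self (h.nonempty_iff.2 hr)]
  refine ⟨hW.fillPure (Or.inl rfl), h.fillPure (Or.inl rfl), fun hc hc' => ?_,
    colPure_fillPure ⟨y, hW.nonempty_iff.2 (h.mem_shape hy)⟩, colPure_fillPure hp.1, common,
    ⟨x, h.mem_shape hx, ?_⟩, ⟨y, ?_, h.mem_shape hy⟩⟩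
  · rw [fillPure_of_ne hc', res2M, fillPure_of_ne hc', fillMixed_of_ne hc, fillPure_of_ne hc]
  · rwa [fillPure_of_ne (by lia)]
  · rw [common hyD (h.mem_shape hy)]
    rwa [fillPure_of_ne (by lia)]

theorem Exchange.colMixed_left (h : Exchange a D k U U') : ColMixed a U k := by
  obtain ⟨r, hr, ha⟩ := h.exists_low
  exact h.left.colMixed_iff.2 ⟨⟨r, h.common hr (h.right.mem_shape ha) ▸ ha⟩,
    h.exists_high.imp fun _ => And.left⟩

theorem Exchange.colMixed_right (h : Exchange a D k U U') : ColMixed a U' (k + 1) := by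
  obtain ⟨r, ha, hr⟩ := h.exists_high
  exact h.right.colMixed_iff.2 ⟨h.exists_low.imp fun _ => And.right,
    ⟨r, h.common (h.left.mem_shape ha) hr ▸ ha⟩⟩

theorem Exchange.resStep_left (h : Exchange a D k U U') : ResStep a U U' := by
  have hd : Descent a U k := h.exists_high.imp fun r ⟨hr, hr'⟩ =>
    ⟨hr, h.left.eq_of_colPure h.left_pure hr' ▸ Finset.mem_singleton_self a⟩
  rw [h.right_unique (exchange_resM1 h.left hd h.colMixed_left h.left_pure)]
  exact .m1 k hd h.colMixed_left h.left_pure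

theorem Exchange.resStep_right (h : Exchange a D k U U') :
    ResStep a (fillPure (a + 1) k U') (fillPure (a + 1) (k + 1) U) := by
  set V := fillPure (a + 1) k U' with hV
  have hVf : IsTwoFilling a D V := h.right.fillPure (Or.inr rfl)
  have hp : ColPure (a + 1) V k := colPure_fillPure h.right_pure.1
  have hm : ColMixed a V (k + 1) :=
    (colMixed_congr fun r => fillPure_of_ne (by lia)).2 h.colMixed_right
  have hd : Descent a V k := h.exists_low.imp fun r ⟨hr, ha⟩ =>
    ⟨hVf.eq_of_colPure hp hr ▸ Finset.mem_singleton_self _, by rwa [hV, fillPure_of_ne (by lia)]⟩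
  have he := exchange_res2M hVf hd hp hm
  rw [hV, fillPure_fillPure, h.right_pure.fillPure_eq_self] at he
  rw [h.left_unique he, fillPure_fillPure, res2M, fillPure_fillPure]
  exact .twoM k hd hp hm

end Resolution

/-! ### Signatures -/

/-- The signs over the columns listed in `l`, in this order; `signature m i T` is the case
`l = List.range m`. -/
noncomputable def signatureOn (i : ℕ) (T : Filling) (l : List ℕ) : List (Sgn × ℕ) :=
  l.filterMap fun c => (colSign i T c).map fun s => (s, c)

section SignatureOn

variable {i c : ℕ} {s : Sgn} {T T' : Filling} {l l' : List ℕ}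

theorem signatureOn_append :
    signatureOn i T (l ++ l') = signatureOn i T l ++ signatureOn i T l' :=
  List.filterMap_append

theorem signatureOn_cons_of_eq_some (h : colSign i T c = some s) :
    signatureOn i T (c :: l) = (s, c) :: signatureOn i T l :=
  List.filterMap_cons_some (by rw [h]; rfl)

theorem signatureOn_cons_of_eq_none (h : colSign i T c = none) :
    signatureOn i T (c :: l) = signatureOn i T l :=
  List.filterMap_cons_none (by rw [h]; rfl)

theorem colSign_congr (h : ∀ r, T r c = T' r c) : colSign i T c = colSign i T' c := by
  have hr : ∀ r, restrictTwo i T r c = restrictTwo i T' r c := fun r => by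
    rw [restrictTwo, h, restrictTwo]
  have hp : ∀ x, ColPure x (restrictTwo i T) c = ColPure x (restrictTwo i T') c := fun _ =>
    propext (colPure_congr hr)
  rw [colSign, colSign, hp, hp]

theorem signatureOn_congr (h : ∀ c ∈ l, ∀ r, T r c = T' r c) :
    signatureOn i T l = signatureOn i T' l :=
  List.filterMap_congr fun c hc => by rw [colSign_congr (h c hc)]

theorem signatureOn_range_of_lt {m : ℕ} (hc : c < m) (h : colSign i T c = some s) :
    signatureOn i T (List.range m) =
      signatureOn i T (List.range c) ++ (s, c) :: signatureOn i T (List.Ico (c + 1) m) := by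
  rw [← List.Ico.zero_bot, ← List.Ico.append_consecutive c.zero_le hc.le, List.Ico.eq_cons hc,
    signatureOn_append, signatureOn_cons_of_eq_some h, List.Ico.zero_bot]

end SignatureOn

section ExchangeSignature

variable {a k m : ℕ} {D : Set (ℕ × ℕ)} {S U U' : Filling}

theorem IsTwoFilling.colSign_eq_plus_iff {c : ℕ} (h : IsTwoFilling a D S) :
    colSign a S c = some .plus ↔ ColPure a S c := by
  rw [_root_.colSign_eq_plus_iff, h.restrictTwo_eq]

theorem IsTwoFilling.colSign_eq_minus_iff {c : ℕ} (h : IsTwoFilling a D S) :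
    colSign a S c = some .minus ↔ ColPure (a + 1) S c := by
  rw [_root_.colSign_eq_minus_iff, h.restrictTwo_eq]

theorem IsTwoFilling.colSign_eq_none {c : ℕ} (h : IsTwoFilling a D S) (hm : ColMixed a S c) :
    colSign a S c = none := by
  rw [colSign, h.restrictTwo_eq, if_neg hm.2.1, if_neg hm.2.2]

theorem Exchange.signatureOn_range (h : Exchange a D k U U') :
    signatureOn a U (List.range (k + 1)) = signatureOn a U' (List.range k) := by
  rw [List.range_succ, signatureOn_append,
    signatureOn_cons_of_eq_none (h.left.colSign_eq_none h.colMixed_left)]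
  refine (List.append_nil _).trans (signatureOn_congr fun c hc r => ?_)
  have := List.mem_range.1 hc
  exact h.agree (by lia) (by lia)

theorem Exchange.signatureOn_Ico (h : Exchange a D k U U') (hk : k + 1 < m) :
    signatureOn a U' (List.Ico (k + 1) m) = signatureOn a U (List.Ico (k + 2) m) := by
  rw [List.Ico.eq_cons hk, signatureOn_cons_of_eq_none (h.right.colSign_eq_none h.colMixed_right)]
  refine signatureOn_congr fun c hc r => ?_
  have := List.Ico.mem.1 hc
  exact (h.agree (by lia) (by lia)).symm

end ExchangeSignature

/-! ### Runs of the algorithm -/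

section NormalForm

variable {a k : ℕ} {S S' N : Filling}

theorem ResStep.exists_descent (h : ResStep a S S') : ∃ k, Descent a S k := by
  cases h with
  | m1 k hd | twoM k hd | twoOne k hd => exact ⟨k, hd⟩

theorem isNormOf_iff_of_forall_not_descent (hS : ∀ k, ¬ Descent a S k) :
    IsNormOf a S N ↔ N = S := by
  constructor
  · rintro ⟨hN, -⟩
    rcases hN.cases_head with rfl | ⟨S', hS', -⟩
    · rfl
    · exact absurd hS'.exists_descent (not_exists.2 hS)
  · rintro rfl
    exact ⟨.refl, hS⟩

theorem isNormOf_iff_of_resStep_iff (h : ∀ S₁, ResStep a S S₁ ↔ S₁ = S') :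
    IsNormOf a S N ↔ IsNormOf a S' N := by
  have hS : ResStep a S S' := (h S').2 rfl
  constructor
  · rintro ⟨hN, hN'⟩
    rcases hN.cases_head with rfl | ⟨S₁, hS₁, hN⟩
    · exact absurd hS.exists_descent (not_exists.2 hN')
    · exact ⟨(h S₁).1 hS₁ ▸ hN, hN'⟩
  · rintro ⟨hN, hN'⟩
    exact ⟨.head hS hN, hN'⟩

theorem norm12_eq_of_isNormOf_iff (h : ∀ N', IsNormOf a S N' ↔ N' = N) : norm12 a S = N := by
  have hex : ∃ N', IsNormOf a S N' := ⟨N, (h N).2 rfl⟩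
  rw [norm12, dif_pos hex]
  exact (h _).1 hex.choose_spec

end NormalForm

/-- An intermediate state of the algorithm: `U` fills `D`, whose columns are `< m`, its column `j`
is `a`-pure, and the rows of `U` increase once column `j` is omitted. The signatures `u`, `v` on
either side of column `j` have no uncancelled `-` and no uncancelled `+`, respectively. For `e_i`
the filling being resolved is `U`, for `f_i` it is `U` with column `j` refilled by `a + 1`. -/
structure IsActive (a m : ℕ) (D : Set (ℕ × ℕ)) (u v : List (Sgn × ℕ)) (j : ℕ) (U : Filling) :
    Prop where
  filling : IsTwoFilling a D U
  lt_of_mem : ∀ {r c}, (r, c) ∈ D → c < m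
  pure : ColPure a U j
  row : ∀ {r c c'}, c < c' → c ≠ j → c' ≠ j → a + 1 ∈ U r c → a ∉ U r c'
  left : signatureOn a U (List.range j) = u
  right : signatureOn a U (List.Ico (j + 1) m) = v
  left_uncancelled : uncancelled .minus u = 0
  right_uncancelled : uncancelled .plus v = 0

section Runs

variable {a m j k : ℕ} {D : Set (ℕ × ℕ)} {u v : List (Sgn × ℕ)} {U U' N : Filling}

namespace IsActive

theorem lt (h : IsActive a m D u v j U) : j < m :=
  have ⟨_, hr⟩ := h.pure.1
  h.lt_of_mem (h.filling.nonempty_iff.1 hr)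

theorem signatureOn_range {s : Sgn} {S : Filling} (h : IsActive a m D u v j U)
    (hS : ∀ r c, c ≠ j → S r c = U r c) (hs : colSign a S j = some s) :
    signatureOn a S (List.range m) = u ++ (s, j) :: v := by
  have hleft : signatureOn a S (List.range j) = signatureOn a U (List.range j) :=
    signatureOn_congr fun c hc r => hS r c (List.mem_range.1 hc).ne
  have hright : signatureOn a S (List.Ico (j + 1) m) = signatureOn a U (List.Ico (j + 1) m) :=
    signatureOn_congr fun c hc r => hS r c (Nat.lt_of_succ_le (List.Ico.mem.1 hc).1).ne'
  rw [signatureOn_range_of_lt h.lt hs, hleft, hright, h.left, h.right]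

theorem not_colPure_left (h : IsActive a m D u v (k + 1) U) : ¬ ColPure (a + 1) U k := by
  intro hp
  have hu := h.left_uncancelled
  rw [← h.left, List.range_succ, signatureOn_append,
    signatureOn_cons_of_eq_some (h.filling.colSign_eq_minus_iff.2 hp)] at hu
  have := (uncancelled_minus_le_append (v := [(.minus, k)])).trans hu.le
  simp [uncancelled, reduceWord, consCancel] at this

theorem not_colPure_right (h : IsActive a m D u v j U) : ¬ ColPure a U (j + 1) := by
  intro hp
  obtain ⟨r, hr⟩ := hp.1
  have hv := h.right_uncancelled
  rw [← h.right, List.Ico.eq_cons (h.lt_of_mem (h.filling.nonempty_iff.1 hr)),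
    signatureOn_cons_of_eq_some (h.filling.colSign_eq_plus_iff.2 hp)] at hv
  exact uncancelled_plus_cons_pos.ne' hv

theorem eq_succ_of_descent (h : IsActive a m D u v j U) (hd : Descent a U k) : j = k + 1 := by
  obtain ⟨r, hr, hr'⟩ := hd
  by_contra hj
  by_cases hk : k = j
  · have := h.pure.eq_of_mem (hk ▸ hr)
    lia
  · exact h.row k.lt_succ_self hk (Ne.symm hj) hr hr'

theorem eq_of_descent_fillPure (h : IsActive a m D u v j U)
    (hd : Descent a (fillPure (a + 1) j U) k) : k = j := by
  obtain ⟨r, hr, hr'⟩ := hd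
  by_contra hk
  by_cases hj : k + 1 = j
  · rw [hj] at hr'
    have := (colPure_fillPure h.pure.1).eq_of_mem hr'
    lia
  · rw [fillPure_of_ne hk] at hr
    rw [fillPure_of_ne hj] at hr'
    exact h.row k.lt_succ_self hk hj hr hr'

theorem colMixed_of_descent (h : IsActive a m D u v (k + 1) U) (hd : Descent a U k) :
    ColMixed a U k := by
  obtain ⟨r, hr, -⟩ := hd
  refine ⟨⟨r, _, hr⟩, fun hp => ?_, h.not_colPure_left⟩
  have := hp.eq_of_mem hr
  lia

theorem colMixed_of_descent_fillPure (h : IsActive a m D u v j U)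
    (hd : Descent a (fillPure (a + 1) j U) j) : ColMixed a (fillPure (a + 1) j U) (j + 1) := by
  obtain ⟨r, -, hr⟩ := hd
  refine ⟨⟨r, _, hr⟩, ?_, fun hp => ?_⟩
  · rw [colPure_congr fun r => fillPure_of_ne (by lia)]
    exact h.not_colPure_right
  · have := hp.eq_of_mem hr
    lia

theorem resStep_iff (h : IsActive a m D u v j U) :
    ResStep a U N ↔ ∃ k, j = k + 1 ∧ Exchange a D k U N := by
  constructor
  · intro hs
    cases hs with
    | m1 k hd hm hp => exact ⟨k, h.eq_succ_of_descent hd, exchange_resM1 h.filling hd hm hp⟩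
    | twoM k hd hp | twoOne k hd hp =>
      obtain rfl := h.eq_succ_of_descent hd
      exact absurd hp h.not_colPure_left
  · rintro ⟨k, rfl, he⟩
    exact he.resStep_left

theorem resStep_fillPure_iff (h : IsActive a m D u v j U') :
    ResStep a (fillPure (a + 1) j U') N ↔
      ∃ U, Exchange a D j U U' ∧ fillPure (a + 1) (j + 1) U = N := by
  have hj := colPure_fillPure (x := a + 1) h.pure.1
  constructor
  · intro hs
    cases hs with
    | m1 k hd hm =>
      obtain rfl := h.eq_of_descent_fillPure hd
      exact absurd hj hm.2.2
    | twoM k hd hp hm =>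
      obtain rfl := h.eq_of_descent_fillPure hd
      have he := exchange_res2M (h.filling.fillPure (Or.inr rfl)) hd hp hm
      rw [fillPure_fillPure, h.pure.fillPure_eq_self] at he
      exact ⟨_, he, by rw [fillPure_fillPure, res2M, fillPure_fillPure]⟩
    | twoOne k hd hp hp' =>
      obtain rfl := h.eq_of_descent_fillPure hd
      exact absurd hp' (h.colMixed_of_descent_fillPure hd).2.1
  · rintro ⟨U, he, rfl⟩
    exact he.resStep_right

theorem exists_exchange_of_descent (h : IsActive a m D u v (k + 1) U) (hd : Descent a U k) :
    ∃ U', Exchange a D k U U' :=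
  ⟨_, exchange_resM1 h.filling hd (h.colMixed_of_descent hd) h.pure⟩

theorem exists_exchange_of_descent_fillPure (h : IsActive a m D u v j U')
    (hd : Descent a (fillPure (a + 1) j U') j) : ∃ U, Exchange a D j U U' := by
  have he := exchange_res2M (h.filling.fillPure (Or.inr rfl)) hd (colPure_fillPure h.pure.1)
    (h.colMixed_of_descent_fillPure hd)
  rw [fillPure_fillPure, h.pure.fillPure_eq_self] at he
  exact ⟨_, he⟩

end IsActive

namespace Exchange

theorem row_right (h : Exchange a D k U U')
    (hU : ∀ {r c c'}, c < c' → c ≠ k + 1 → c' ≠ k + 1 → a + 1 ∈ U r c → a ∉ U r c')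
    {r c c' : ℕ} (hcc : c < c') (hc : c ≠ k) (hc' : c' ≠ k) (hr : a + 1 ∈ U' r c) :
    a ∉ U' r c' := by
  intro hr'
  by_cases hk : c = k + 1
  · subst hk
    have hD := h.mem_left_of_high hr
    rw [← h.common hD (h.right.mem_shape hr)] at hr
    rw [← h.agree hc' (by lia)] at hr'
    exact hU (by lia) (by lia) (by lia) hr hr'
  rw [← h.agree hc hk] at hr
  by_cases hk' : c' = k + 1
  · subst hk'
    have hD : (r, k) ∈ D := h.left.mem_shape_of_le (h.left.mem_shape hr)
      (h.right.mem_shape hr') le_rfl le_rfl (by lia) (by lia)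
    rw [← h.common hD (h.right.mem_shape hr')] at hr'
    exact hU (by lia) hk (by lia) hr hr'
  · rw [← h.agree hc' hk'] at hr'
    exact hU hcc hk hk' hr hr'

theorem row_left (h : Exchange a D k U U')
    (hU : ∀ {r c c'}, c < c' → c ≠ k → c' ≠ k → a + 1 ∈ U' r c → a ∉ U' r c')
    {r c c' : ℕ} (hcc : c < c') (hc : c ≠ k + 1) (hc' : c' ≠ k + 1) (hr : a + 1 ∈ U r c) :
    a ∉ U r c' := by
  intro hr'
  by_cases hk' : c' = k
  · subst hk'
    have hD := h.mem_right_of_low hr'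
    rw [h.common (h.left.mem_shape hr') hD] at hr'
    rw [h.agree (by lia) hc] at hr
    exact hU (by lia) (by lia) (by lia) hr hr'
  rw [h.agree hk' hc'] at hr'
  by_cases hk : c = k
  · subst hk
    have hD : (r, c + 1) ∈ D := h.left.mem_shape_of_le (h.left.mem_shape hr)
      (h.right.mem_shape hr') le_rfl le_rfl (by lia) (by lia)
    rw [h.common (h.left.mem_shape hr) hD] at hr
    exact hU (by lia) (by lia) hk' hr hr'
  · rw [h.agree hk hc] at hr
    exact hU hcc hk hk' hr hr'

theorem isActive_right (h : Exchange a D k U U') (hU : IsActive a m D u v (k + 1) U) :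
    IsActive a m D u v k U' where
  filling := h.right
  lt_of_mem := hU.lt_of_mem
  pure := h.right_pure
  row := h.row_right hU.row
  left := h.signatureOn_range ▸ hU.left
  right := (h.signatureOn_Ico hU.lt).trans hU.right
  left_uncancelled := hU.left_uncancelled
  right_uncancelled := hU.right_uncancelled

theorem isActive_left (h : Exchange a D k U U') (hU : IsActive a m D u v k U') :
    IsActive a m D u v (k + 1) U where
  filling := h.left
  lt_of_mem := hU.lt_of_mem
  pure := h.left_pure
  row := h.row_left hU.row
  left := h.signatureOn_range.trans hU.left
  right := by
    obtain ⟨r, -, hr⟩ := h.exists_high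
    exact (h.signatureOn_Ico (hU.lt_of_mem hr)).symm.trans hU.right
  left_uncancelled := hU.left_uncancelled
  right_uncancelled := hU.right_uncancelled

end Exchange

/-- A sequence of exchanges, where the pair `(j, U)` stands for the filling `U` with the pure
column `j`. -/
def ExchangeChain (a : ℕ) (D : Set (ℕ × ℕ)) : ℕ × Filling → ℕ × Filling → Prop :=
  Relation.ReflTransGen fun p q => p.1 = q.1 + 1 ∧ Exchange a D q.1 p.2 q.2

theorem ExchangeChain.resStep_left {p q : ℕ × Filling} (h : ExchangeChain a D p q) :
    Relation.ReflTransGen (ResStep a) p.2 q.2 := by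
  induction h with
  | refl => exact .refl
  | tail _ h ih => exact ih.tail h.2.resStep_left

theorem ExchangeChain.resStep_right {p q : ℕ × Filling} (h : ExchangeChain a D p q) :
    Relation.ReflTransGen (ResStep a) (fillPure (a + 1) q.1 q.2) (fillPure (a + 1) p.1 p.2) := by
  induction h with
  | refl => exact .refl
  | tail _ h ih => exact .head (h.1 ▸ h.2.resStep_right) ih

theorem IsActive.exists_run_left (h : IsActive a m D u v j U) :
    ∃ B N, ExchangeChain a D (j, U) (B, N) ∧ IsActive a m D u v B N ∧
      ∀ N', IsNormOf a U N' ↔ N' = N := by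
  induction j generalizing U with
  | zero =>
    exact ⟨0, U, .refl, h, fun N' => isNormOf_iff_of_forall_not_descent fun k hd =>
      absurd (h.eq_succ_of_descent hd) k.succ_ne_zero.symm⟩
  | succ j ih =>
    by_cases hd : Descent a U j
    · obtain ⟨U', he⟩ := h.exists_exchange_of_descent hd
      obtain ⟨B, N, hch, hB, hN⟩ := ih (he.isActive_right h)
      have hstep : ∀ S, ResStep a U S ↔ S = U' := fun S => by
        rw [h.resStep_iff]
        constructor
        · rintro ⟨k, hk, hS⟩
          obtain rfl := Nat.succ_injective hk
          exact hS.right_unique he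
        · rintro rfl
          exact ⟨j, rfl, he⟩
      exact ⟨B, N, .head ⟨rfl, he⟩ hch, hB,
        fun N' => (isNormOf_iff_of_resStep_iff hstep).trans (hN N')⟩
    · refine ⟨j + 1, U, .refl, h, fun N' => isNormOf_iff_of_forall_not_descent fun k hk => hd ?_⟩
      exact Nat.succ_injective (h.eq_succ_of_descent hk) ▸ hk

theorem IsActive.exists_run_right (h : IsActive a m D u v j U') :
    ∃ A U, ExchangeChain a D (A, U) (j, U') ∧ IsActive a m D u v A U ∧
      ∀ N', IsNormOf a (fillPure (a + 1) j U') N' ↔ N' = fillPure (a + 1) A U := by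
  obtain ⟨d, hm⟩ := Nat.exists_eq_add_of_le h.lt.le
  induction d generalizing j U' with
  | zero => exact absurd h.lt (by lia)
  | succ d ih =>
    by_cases hd : Descent a (fillPure (a + 1) j U') j
    · obtain ⟨U, he⟩ := h.exists_exchange_of_descent_fillPure hd
      obtain ⟨A, N, hch, hA, hN⟩ := ih (he.isActive_left h) (by lia)
      have hstep : ∀ S, ResStep a (fillPure (a + 1) j U') S ↔ S = fillPure (a + 1) (j + 1) U := by
        intro S
        rw [h.resStep_fillPure_iff]
        constructor
        · rintro ⟨V, hV, rfl⟩
          rw [hV.left_unique he]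
        · rintro rfl
          exact ⟨U, he, rfl⟩
      exact ⟨A, N, .tail hch ⟨rfl, he⟩, hA,
        fun N' => (isNormOf_iff_of_resStep_iff hstep).trans (hN N')⟩
    · exact ⟨j, U', .refl, h, fun N' => isNormOf_iff_of_forall_not_descent fun k hk =>
        hd (h.eq_of_descent_fillPure hk ▸ hk)⟩

namespace IsActive

theorem isNormOf_iff_of_isNormOf (h : IsActive a m D u v j U) (hN : IsNormOf a U N) {N' : Filling} :
    IsNormOf a U N' ↔ N' = N := by
  obtain ⟨_, M, -, -, hM⟩ := h.exists_run_left
  rw [hM, (hM N).1 hN]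

theorem isNormOf_fillPure_iff_of_isNormOf (h : IsActive a m D u v j U)
    (hN : IsNormOf a (fillPure (a + 1) j U) N) {N' : Filling} :
    IsNormOf a (fillPure (a + 1) j U) N' ↔ N' = N := by
  obtain ⟨_, M, -, -, hM⟩ := h.exists_run_right
  rw [hM, (hM N).1 hN]

theorem signatureOn_eq (h : IsActive a m D u v j U) :
    signatureOn a U (List.range m) = u ++ (.plus, j) :: v :=
  h.signatureOn_range (fun _ _ _ => rfl) (h.filling.colSign_eq_plus_iff.2 h.pure)

theorem signatureOn_fillPure (h : IsActive a m D u v j U) :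
    signatureOn a (fillPure (a + 1) j U) (List.range m) = u ++ (.minus, j) :: v :=
  h.signatureOn_range (fun _ _ hc => fillPure_of_ne hc)
    ((h.filling.fillPure (Or.inr rfl)).colSign_eq_minus_iff.2 (colPure_fillPure h.pure.1))

end IsActive

end Runs

/-! ### Restriction to two letters -/

section ReplaceTwo

variable {i r c x : ℕ} {s : Sgn} {T T' N : Filling} {D : Set (ℕ × ℕ)}

theorem mem_restrictTwo : x ∈ restrictTwo i T r c ↔ x ∈ T r c ∧ (x = i ∨ x = i + 1) := by
  simp [restrictTwo]

theorem mem_replaceTwo :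
    x ∈ replaceTwo i T N r c ↔ (x ∈ T r c ∧ ¬ (x = i ∨ x = i + 1)) ∨ x ∈ N r c := by
  simp [replaceTwo]

theorem restrictTwo_replaceTwo (T : Filling) (hN : IsTwoFilling i D N) :
    restrictTwo i (replaceTwo i T N) = N := by
  funext r c
  ext x
  have := @hN.eq_or_eq_of_mem (r := r) (c := c) (x := x)
  rw [mem_restrictTwo, mem_replaceTwo]
  tauto

theorem replaceTwo_sdiff (T : Filling) (hN : IsTwoFilling i D N) (r c : ℕ) :
    replaceTwo i T N r c \ {i, i + 1} = T r c \ {i, i + 1} := by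
  rw [replaceTwo, Finset.union_sdiff_distrib, Finset.sdiff_idem,
    Finset.sdiff_eq_empty_iff_subset.2 hN.subset, Finset.union_empty]

theorem replaceTwo_restrictTwo (h : ∀ r c, T r c \ {i, i + 1} = T' r c \ {i, i + 1}) :
    replaceTwo i T (restrictTwo i T') = T' := by
  funext r c
  rw [replaceTwo, h, restrictTwo, Finset.sdiff_union_inter]

theorem signatureOn_restrictTwo (l : List ℕ) :
    signatureOn i (restrictTwo i T) l = signatureOn i T l := by
  have h : restrictTwo i (restrictTwo i T) = restrictTwo i T := by
    funext r c
    simp [restrictTwo]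
  unfold signatureOn colSign
  rw [h]

theorem nodup_signature (m i : ℕ) (T : Filling) : (signature m i T).Nodup :=
  List.nodup_range.filterMap fun c d b hc hd => by
    obtain ⟨_, -, rfl⟩ := Option.map_eq_some_iff.1 hc
    obtain ⟨_, -, h⟩ := Option.map_eq_some_iff.1 hd
    exact (congrArg Prod.snd h).symm

theorem signature_eq_append_cons {m A : ℕ} {u v : List (Sgn × ℕ)}
    (h : signature m i T = u ++ (s, A) :: v) :
    A < m ∧ colSign i T A = some s ∧ signatureOn i T (List.range A) = u ∧
      signatureOn i T (List.Ico (A + 1) m) = v := by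
  obtain ⟨c, hc, hcA⟩ := List.mem_filterMap.1
    (show (s, A) ∈ signature m i T from h ▸ List.mem_append_right _ List.mem_cons_self)
  obtain ⟨s', hs, hsA⟩ := Option.map_eq_some_iff.1 hcA
  obtain ⟨rfl, rfl⟩ := Prod.mk.inj hsA
  have hnodup := List.nodup_middle.1 (h ▸ nodup_signature m i T)
  obtain ⟨hu, hv⟩ := not_or.1 (List.mem_append.not.1 (List.nodup_cons.1 hnodup).1)
  have hm := List.mem_range.1 hc
  have hsplit := h.symm.trans (signatureOn_range_of_lt hm hs)
  obtain ⟨hu', -, hv'⟩ := (List.append_cons_inj_of_notMem hu hv).1 hsplit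
  exact ⟨hm, hs, hu'.symm, hv'.symm⟩

end ReplaceTwo

/-- The boxes of `T^{(i)}`. -/
def twoShape (i : ℕ) (T : Filling) : Set (ℕ × ℕ) := {b | (restrictTwo i T b.1 b.2).Nonempty}

theorem mem_twoShape {i r c : ℕ} {T : Filling} :
    (r, c) ∈ twoShape i T ↔ ∃ x ∈ T r c, x = i ∨ x = i + 1 := by
  simp only [twoShape, Set.mem_ofPred_eq, Finset.Nonempty, mem_restrictTwo]

theorem InSkew.of_le_of_le {lam mu : YoungDiagram} {r c r₁ c₁ r₂ c₂ : ℕ} (h₁ : InSkew lam mu r₁ c₁)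
    (h₂ : InSkew lam mu r₂ c₂) (hr₁ : r₁ ≤ r) (hr₂ : r ≤ r₂) (hc₁ : c₁ ≤ c) (hc₂ : c ≤ c₂) :
    InSkew lam mu r c :=
  ⟨lam.up_left_mem hr₂ hc₂ h₂.1, fun hm => h₁.2 (mu.up_left_mem hr₁ hc₁ hm)⟩

section ReplaceSVRPP

variable {i r r' c c' x : ℕ} {T N : Filling}

theorem nonempty_replaceTwo (hN : IsTwoFilling i (twoShape i T) N) :
    (replaceTwo i T N r c).Nonempty ↔ (T r c).Nonempty := by
  conv_rhs => rw [← Finset.sdiff_union_inter (T r c) {i, i + 1}]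
  rw [replaceTwo, Finset.union_nonempty, Finset.union_nonempty, hN.nonempty_iff]
  rfl

theorem SetLE.replaceTwo (hN : IsTwoFilling i (twoShape i T) N) (hT : SetLE (T r c) (T r' c'))
    (h : i + 1 ∈ N r c → i ∉ N r' c') :
    SetLE (replaceTwo i T N r c) (replaceTwo i T N r' c') := by
  intro p hp q hq
  rcases mem_replaceTwo.1 hp with ⟨hp, hpi⟩ | hp <;> rcases mem_replaceTwo.1 hq with ⟨hq, hqi⟩ | hq
  · exact hT p hp q hq
  · obtain ⟨y, hy, hyi⟩ := mem_twoShape.1 (hN.mem_shape hq)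
    have := hT p hp y hy
    have := hN.eq_or_eq_of_mem hq
    lia
  · obtain ⟨y, hy, hyi⟩ := mem_twoShape.1 (hN.mem_shape hp)
    have := hT y hy q hq
    have := hN.eq_or_eq_of_mem hp
    lia
  · by_contra hlt
    have hp' := hN.eq_or_eq_of_mem hp
    have hq' := hN.eq_or_eq_of_mem hq
    have hpi : p = i + 1 := by lia
    have hqi : q = i := by lia
    exact h (hpi ▸ hp) (hqi ▸ hq)

end ReplaceSVRPP

namespace IsSVRPP

variable {n i r c r' c' p q x : ℕ} {lam mu : YoungDiagram} {T N : Filling}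

theorem inSkew_iff (h : IsSVRPP n lam mu T) : InSkew lam mu r c ↔ (T r c).Nonempty :=
  ⟨h.nonempty r c, fun hne => by_contra fun hs => hne.ne_empty (h.outside r c hs)⟩

theorem inSkew (h : IsSVRPP n lam mu T) (hx : x ∈ T r c) : InSkew lam mu r c :=
  h.inSkew_iff.2 ⟨x, hx⟩

theorem le_of_row_lt (h : IsSVRPP n lam mu T) (hc : c < c') (hp : p ∈ T r c) (hq : q ∈ T r c') :
    p ≤ q := by
  induction c', hc using Nat.le_induction generalizing q with
  | base => exact h.row r c (h.inSkew hp) (h.inSkew hq) p hp q hq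
  | succ d hd ih =>
    have hs : InSkew lam mu r d :=
      (h.inSkew hp).of_le_of_le (h.inSkew hq) le_rfl le_rfl (by lia) (by lia)
    obtain ⟨z, hz⟩ := h.nonempty r d hs
    exact (ih hz).trans (h.row r d hs (h.inSkew hq) z hz q hq)

theorem le_of_col_lt (h : IsSVRPP n lam mu T) (hr : r < r') (hp : p ∈ T r c) (hq : q ∈ T r' c) :
    p ≤ q := by
  induction r', hr using Nat.le_induction generalizing q with
  | base => exact h.col r c (h.inSkew hp) (h.inSkew hq) p hp q hq
  | succ d hd ih =>
    have hs : InSkew lam mu d c :=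
      (h.inSkew hp).of_le_of_le (h.inSkew hq) (by lia) (by lia) le_rfl le_rfl
    obtain ⟨z, hz⟩ := h.nonempty d c hs
    exact (ih hz).trans (h.col d c hs (h.inSkew hq) z hz q hq)

theorem le_of_le (h : IsSVRPP n lam mu T) (hr : r ≤ r') (hc : c ≤ c') (hne : (r, c) ≠ (r', c'))
    (hp : p ∈ T r c) (hq : q ∈ T r' c') : p ≤ q := by
  rcases hr.eq_or_lt with rfl | hr
  · exact h.le_of_row_lt (hc.lt_of_ne fun e => hne (e ▸ rfl)) hp hq
  rcases hc.eq_or_lt with rfl | hc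
  · exact h.le_of_col_lt hr hp hq
  obtain ⟨z, hz⟩ := h.nonempty r' c
    ((h.inSkew hp).of_le_of_le (h.inSkew hq) hr.le le_rfl le_rfl hc.le)
  exact (h.le_of_col_lt hr hp hz).trans (h.le_of_row_lt hc hz hq)

theorem ordConnected_twoShape (h : IsSVRPP n lam mu T) (i : ℕ) : (twoShape i T).OrdConnected := by
  refine ⟨fun b₁ h₁ b₂ h₂ b hb => ?_⟩
  rcases eq_or_ne b₁ b with rfl | hne₁
  · exact h₁
  rcases eq_or_ne b b₂ with rfl | hne₂
  · exact h₂
  obtain ⟨x, hx, hxi⟩ := mem_twoShape.1 h₁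
  obtain ⟨y, hy, hyi⟩ := mem_twoShape.1 h₂
  obtain ⟨⟨hr₁, hc₁⟩, hr₂, hc₂⟩ := hb
  obtain ⟨z, hz⟩ := h.nonempty b.1 b.2
    ((h.inSkew hx).of_le_of_le (h.inSkew hy) hr₁ hr₂ hc₁ hc₂)
  have hxz := h.le_of_le hr₁ hc₁ hne₁ hx hz
  have hzy := h.le_of_le hr₂ hc₂ hne₂ hz hy
  exact mem_twoShape.2 ⟨z, hz, by lia⟩

theorem mem_of_mem_twoShape (h : IsSVRPP n lam mu T) (hb : (r, c) ∈ twoShape i T) :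
    (r, c) ∈ lam :=
  have ⟨_, hx, _⟩ := mem_twoShape.1 hb
  (h.inSkew hx).1

theorem lt_rowLen (h : IsSVRPP n lam mu T) (hb : (r, c) ∈ twoShape i T) : c < lam.rowLen 0 :=
  YoungDiagram.mem_iff_lt_rowLen.1 (lam.up_left_mem r.zero_le le_rfl (h.mem_of_mem_twoShape hb))

theorem restrictTwo_row (h : IsSVRPP n lam mu T) (hc : c < c') (hm : i + 1 ∈ restrictTwo i T r c) :
    i ∉ restrictTwo i T r c' := fun hm' => by
  have := h.le_of_row_lt hc (mem_restrictTwo.1 hm).1 (mem_restrictTwo.1 hm').1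
  lia

theorem isTwoFilling (h : IsSVRPP n lam mu T) (i : ℕ) :
    IsTwoFilling i (twoShape i T) (restrictTwo i T) where
  ordConnected := h.ordConnected_twoShape i
  finite := lam.cells.finite_toSet.subset fun _ hb => h.mem_of_mem_twoShape hb
  nonempty_iff := Iff.rfl
  subset {_ _} := Finset.inter_subset_right
  col hr hm hm' := by
    have := h.le_of_col_lt hr (mem_restrictTwo.1 hm).1 (mem_restrictTwo.1 hm').1
    lia

theorem not_descent (h : IsSVRPP n lam mu T) (i k : ℕ) : ¬ Descent i (restrictTwo i T) k :=
  fun ⟨_, hr, hr'⟩ => h.restrictTwo_row k.lt_succ_self hr hr'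

protected theorem replaceTwo (h : IsSVRPP n lam mu T) (h1 : 1 ≤ i) (h2 : i < n)
    (hN : IsTwoFilling i (twoShape i T) N) (hd : ∀ k, ¬ Descent i N k) :
    IsSVRPP n lam mu (replaceTwo i T N) where
  outside r c hs := Finset.not_nonempty_iff_eq_empty.1 fun hne =>
    hs (h.inSkew_iff.2 ((nonempty_replaceTwo hN).1 hne))
  nonempty r c hs := (nonempty_replaceTwo hN).2 (h.nonempty r c hs)
  letters r c x hx := by
    rcases mem_replaceTwo.1 hx with ⟨hx, -⟩ | hx
    · exact h.letters r c hx
    · have := hN.eq_or_eq_of_mem hx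
      exact Finset.mem_Icc.2 (by lia)
  row r c hs hs' := SetLE.replaceTwo hN (h.row r c hs hs') fun hm hm' => hd c ⟨r, hm, hm'⟩
  col r c hs hs' := SetLE.replaceTwo hN (h.col r c hs hs') (hN.col r.lt_succ_self)

theorem isActive {s : Sgn} {A : ℕ} {u v : List (Sgn × ℕ)} (h : IsSVRPP n lam mu T)
    (hw : signature (lam.rowLen 0) i T = u ++ (s, A) :: v) (hne : ColNonempty (restrictTwo i T) A)
    (hu : uncancelled .minus u = 0) (hv : uncancelled .plus v = 0) :
    IsActive i (lam.rowLen 0) (twoShape i T) u v A (fillPure i A (restrictTwo i T)) := by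
  obtain ⟨-, -, hleft, hright⟩ := signature_eq_append_cons hw
  refine ⟨(h.isTwoFilling i).fillPure (Or.inl rfl), h.lt_rowLen, colPure_fillPure hne, ?_, ?_, ?_,
    hu, hv⟩
  · intro r c c' hcc hc hc' hm
    rw [fillPure_of_ne hc] at hm
    rw [fillPure_of_ne hc']
    exact h.restrictTwo_row hcc hm
  · rw [← hleft, ← signatureOn_restrictTwo (T := T)]
    exact signatureOn_congr fun c hc r => fillPure_of_ne (List.mem_range.1 hc).ne
  · rw [← hright, ← signatureOn_restrictTwo (T := T)]
    exact signatureOn_congr fun c hc r =>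
      fillPure_of_ne (Nat.lt_of_succ_le (List.Ico.mem.1 hc).1).ne'

end IsSVRPP

/-! ### Signs and column counts -/

section Weight

variable {a i m n x y : ℕ} {s : Sgn} {lam mu : YoungDiagram} {D : Set (ℕ × ℕ)} {S T : Filling}

theorem signCount_signatureOn_range (hm : ∀ c, colSign i T c = some s → c < m) :
    signCount s (signatureOn i T (List.range m)) = {c | colSign i T c = some s}.ncard := by
  classical
  have hcount : signCount s (signatureOn i T (List.range m)) =
      Nat.count (fun c => colSign i T c = some s) m := by
    rw [signCount, signatureOn, List.map_filterMap, List.count, List.countP_filterMap, Nat.count]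
    refine List.countP_congr fun c _ => ?_
    cases colSign i T c <;> simp
  rw [hcount, Nat.count_eq_card_filter_range, ← Set.ncard_coe_finset]
  congr 1
  ext c
  simpa using hm c

theorem ircont_congr {T' : Filling} (h : ∀ r c, x ∈ T r c ↔ x ∈ T' r c) :
    ircont T x = ircont T' x := by
  simp only [ircont, h]

theorem ircont_restrictTwo (hx : x = i ∨ x = i + 1) : ircont (restrictTwo i T) x = ircont T x :=
  ircont_congr fun _ _ => mem_restrictTwo.trans (and_iff_left hx)

namespace IsTwoFilling

theorem ircont_add_ncard_colPure (h : IsTwoFilling a D S)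
    (hxy : x = a ∧ y = a + 1 ∨ x = a + 1 ∧ y = a) :
    ircont S x + {c | ColPure y S c}.ncard = (Prod.snd '' D).ncard := by
  have hunion : {c | ∃ r, x ∈ S r c} ∪ {c | ColPure y S c} = Prod.snd '' D := by
    ext c
    constructor
    · rintro (⟨r, hr⟩ | ⟨⟨r, hr⟩, -⟩)
      · exact ⟨(r, c), h.mem_shape hr, rfl⟩
      · exact ⟨(r, c), h.nonempty_iff.1 hr, rfl⟩
    · rintro ⟨⟨r, c⟩, hD, rfl⟩
      by_contra hc
      obtain ⟨hx, hp⟩ := not_or.1 hc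
      refine hp ⟨⟨r, h.nonempty_iff.2 hD⟩, fun r hr => hr.subset_singleton_iff.1 fun z hz => ?_⟩
      have hzx : z ≠ x := fun e => hx ⟨r, e ▸ hz⟩
      have := h.eq_or_eq_of_mem hz
      exact Finset.mem_singleton.2 (by lia)
  have hfin := h.finite.image Prod.snd
  rw [← hunion] at hfin ⊢
  refine (Set.ncard_union_eq (Set.disjoint_left.2 ?_) (hfin.subset Set.subset_union_left)
    (hfin.subset Set.subset_union_right)).symm
  rintro c ⟨r, hr⟩ hp
  have := hp.eq_of_mem hr
  lia

theorem signCount_signatureOn_range (h : IsTwoFilling a D S)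
    (hm : ∀ {r c}, (r, c) ∈ D → c < m) (hs : ∀ c, colSign a S c = some s ↔ ColPure y S c) :
    signCount s (signatureOn a S (List.range m)) = {c | ColPure y S c}.ncard := by
  have hlt : ∀ c, colSign a S c = some s → c < m := fun c hc => by
    obtain ⟨r, hr⟩ := ((hs c).1 hc).1
    exact hm (h.nonempty_iff.1 hr)
  simp only [_root_.signCount_signatureOn_range hlt, hs]

theorem ircont_add_signCount_minus (h : IsTwoFilling a D S) (hm : ∀ {r c}, (r, c) ∈ D → c < m) :
    ircont S a + signCount .minus (signatureOn a S (List.range m)) = (Prod.snd '' D).ncard := by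
  rw [h.signCount_signatureOn_range hm fun _ => h.colSign_eq_minus_iff,
    h.ircont_add_ncard_colPure (Or.inl ⟨rfl, rfl⟩)]

theorem ircont_succ_add_signCount_plus (h : IsTwoFilling a D S)
    (hm : ∀ {r c}, (r, c) ∈ D → c < m) :
    ircont S (a + 1) + signCount .plus (signatureOn a S (List.range m)) =
      (Prod.snd '' D).ncard := by
  rw [h.signCount_signatureOn_range hm fun _ => h.colSign_eq_plus_iff,
    h.ircont_add_ncard_colPure (Or.inr ⟨rfl, rfl⟩)]

theorem ircont_add_signCount_signature (h : IsTwoFilling i D (restrictTwo i T))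
    (hm : ∀ {r c}, (r, c) ∈ D → c < m) :
    ircont T i + signCount .minus (signature m i T) = (Prod.snd '' D).ncard ∧
      ircont T (i + 1) + signCount .plus (signature m i T) = (Prod.snd '' D).ncard := by
  have hlow := h.ircont_add_signCount_minus hm
  have hhigh := h.ircont_succ_add_signCount_plus hm
  rw [signatureOn_restrictTwo, ircont_restrictTwo (Or.inl rfl)] at hlow
  rw [signatureOn_restrictTwo, ircont_restrictTwo (Or.inr rfl)] at hhigh
  exact ⟨hlow, hhigh⟩

end IsTwoFilling

theorem IsSVRPP.uncancelled_plus_sub_minus (h : IsSVRPP n lam mu T) (i : ℕ) :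
    (uncancelled .plus (signature (lam.rowLen 0) i T) : ℤ) -
      uncancelled .minus (signature (lam.rowLen 0) i T) = ircont T i - ircont T (i + 1) := by
  obtain ⟨hlow, hhigh⟩ := (h.isTwoFilling i).ircont_add_signCount_signature h.lt_rowLen
  have := uncancelled_plus_add_signCount_minus (signature (lam.rowLen 0) i T)
  lia

end Weight

/-! ### The edges of the crystal -/

section Edge

variable {n i A : ℕ} {lam mu : YoungDiagram} {T T' : Filling}

theorem IsSVRPP.exists_isActive_eStart (h : IsSVRPP n lam mu T) (hA : eColumn lam i T = some A) :
    (∃ u v, IsActive i (lam.rowLen 0) (twoShape i T) u v A (eStart i T A)) ∧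
      fillPure (i + 1) A (eStart i T A) = restrictTwo i T := by
  obtain ⟨u, v, hw, hu, hv⟩ := leftmostMinus_reduceWord_eq_some_iff.1 hA
  have hp := colSign_eq_minus_iff.1 (signature_eq_append_cons hw).2.1
  exact ⟨⟨u, v, h.isActive hw hp.1 hu hv⟩, by rw [eStart, fillPure_fillPure, hp.fillPure_eq_self]⟩

theorem IsSVRPP.exists_isActive_fColumn (h : IsSVRPP n lam mu T) (hA : fColumn lam i T = some A) :
    ∃ u v, IsActive i (lam.rowLen 0) (twoShape i T) u v A (restrictTwo i T) := by
  obtain ⟨u, v, hw, hu, hv⟩ := rightmostPlus_reduceWord_eq_some_iff.1 hA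
  have hp := colSign_eq_plus_iff.1 (signature_eq_append_cons hw).2.1
  exact ⟨u, v, hp.fillPure_eq_self ▸ h.isActive hw hp.1 hu hv⟩

theorem IsSVRPP.existsUnique_isNormOf_eStart (h : IsSVRPP n lam mu T)
    (hA : eColumn lam i T = some A) : ∃! N, IsNormOf i (eStart i T A) N := by
  obtain ⟨⟨u, v, hact⟩, -⟩ := h.exists_isActive_eStart hA
  obtain ⟨_, N, -, -, hN⟩ := hact.exists_run_left
  exact ⟨N, (hN N).2 rfl, fun N' => (hN N').1⟩

theorem IsSVRPP.existsUnique_isNormOf_fStart (h : IsSVRPP n lam mu T)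
    (hA : fColumn lam i T = some A) : ∃! N, IsNormOf i (fStart i T A) N := by
  obtain ⟨u, v, hact⟩ := h.exists_isActive_fColumn hA
  obtain ⟨_, _, -, -, hN⟩ := hact.exists_run_right
  exact ⟨_, (hN _).2 rfl, fun N' => (hN N').1⟩

/-- An `i`-arrow `e_i(T) = T'` (equivalently `f_i(T') = T`) of the crystal, in a form that does not
prefer one direction: `T` and `T'` agree away from the letters `i`, `i + 1`, and a chain of
exchanges leads from `T^{(i)}`, with its column `A` refilled by `i`, to `T'^{(i)}`. -/
structure CrystalEdge (lam mu : YoungDiagram) (n i : ℕ) (T T' : Filling) : Prop where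
  source : IsSVRPP n lam mu T
  target : IsSVRPP n lam mu T'
  sdiff_eq : ∀ r c, T r c \ {i, i + 1} = T' r c \ {i, i + 1}
  exists_chain : ∃ D u v A B U, ExchangeChain i D (A, U) (B, restrictTwo i T') ∧
    IsActive i (lam.rowLen 0) D u v A U ∧
    IsActive i (lam.rowLen 0) D u v B (restrictTwo i T') ∧ fillPure (i + 1) A U = restrictTwo i T

namespace IsSVRPP

theorem crystalEdge_of_eOp (h : IsSVRPP n lam mu T) (h1 : 1 ≤ i) (h2 : i < n)
    (he : eOp lam i T = some T') : CrystalEdge lam mu n i T T' := by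
  obtain ⟨A, hA, rfl⟩ := Option.map_eq_some_iff.1 he
  obtain ⟨⟨u, v, hact⟩, hT⟩ := h.exists_isActive_eStart hA
  obtain ⟨B, N, hchain, hact', hN⟩ := hact.exists_run_left
  rw [norm12_eq_of_isNormOf_iff hN]
  have hres := restrictTwo_replaceTwo T hact'.filling
  exact ⟨h, h.replaceTwo h1 h2 hact'.filling ((hN N).2 rfl).2,
    fun r c => (replaceTwo_sdiff T hact'.filling r c).symm,
    _, u, v, A, B, eStart i T A, by rwa [hres], hact, by rwa [hres], hT⟩

theorem crystalEdge_of_fOp (h : IsSVRPP n lam mu T') (h1 : 1 ≤ i) (h2 : i < n)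
    (hf : fOp lam i T' = some T) : CrystalEdge lam mu n i T T' := by
  obtain ⟨B, hB, rfl⟩ := Option.map_eq_some_iff.1 hf
  obtain ⟨u, v, hact⟩ := h.exists_isActive_fColumn hB
  obtain ⟨A, U, hchain, hact', hN⟩ := hact.exists_run_right
  rw [fStart, norm12_eq_of_isNormOf_iff hN]
  have hV := hact'.filling.fillPure (c := A) (Or.inr rfl)
  exact ⟨h.replaceTwo h1 h2 hV ((hN _).2 rfl).2, h, replaceTwo_sdiff T' hV,
    _, u, v, A, B, U, hchain, hact', hact, (restrictTwo_replaceTwo T' hV).symm⟩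

end IsSVRPP

namespace CrystalEdge

theorem exists_signature (h : CrystalEdge lam mu n i T T') : ∃ u v A B,
    signature (lam.rowLen 0) i T = u ++ (.minus, A) :: v ∧
    signature (lam.rowLen 0) i T' = u ++ (.plus, B) :: v ∧
    uncancelled .minus u = 0 ∧ uncancelled .plus v = 0 := by
  obtain ⟨D, u, v, A, B, U, -, hact, hact', hT⟩ := h.exists_chain
  refine ⟨u, v, A, B, ?_, ?_, hact.left_uncancelled, hact.right_uncancelled⟩
  · exact (signatureOn_restrictTwo _).symm.trans (hT ▸ hact.signatureOn_fillPure)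
  · exact (signatureOn_restrictTwo _).symm.trans hact'.signatureOn_eq

theorem uncancelled_minus (h : CrystalEdge lam mu n i T T') :
    uncancelled .minus (signature (lam.rowLen 0) i T) =
      uncancelled .minus (signature (lam.rowLen 0) i T') + 1 := by
  obtain ⟨u, v, A, B, hT, hT', hu, hv⟩ := h.exists_signature
  simp [hT, hT', uncancelled, reduceWord_append_cons hu hv, add_assoc]

theorem uncancelled_plus (h : CrystalEdge lam mu n i T T') :
    uncancelled .plus (signature (lam.rowLen 0) i T') =
      uncancelled .plus (signature (lam.rowLen 0) i T) + 1 := by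
  obtain ⟨u, v, A, B, hT, hT', hu, hv⟩ := h.exists_signature
  simp [hT, hT', uncancelled, reduceWord_append_cons hu hv, add_assoc]

theorem eOp_eq (h : CrystalEdge lam mu n i T T') : eOp lam i T = some T' := by
  obtain ⟨D, u, v, A, B, U, hchain, hact, -, hT⟩ := h.exists_chain
  have hcol : eColumn lam i T = some A := leftmostMinus_reduceWord_eq_some_iff.2
    ⟨u, v, (signatureOn_restrictTwo _).symm.trans (hT ▸ hact.signatureOn_fillPure),
      hact.left_uncancelled, hact.right_uncancelled⟩
  have hstart : eStart i T A = U := by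
    rw [eStart, ← hT, fillPure_fillPure, hact.pure.fillPure_eq_self]
  have hnorm : IsNormOf i U (restrictTwo i T') := ⟨hchain.resStep_left, h.target.not_descent i⟩
  rw [eOp, hcol, Option.map_some, hstart,
    norm12_eq_of_isNormOf_iff fun _ => hact.isNormOf_iff_of_isNormOf hnorm,
    replaceTwo_restrictTwo h.sdiff_eq]

theorem fOp_eq (h : CrystalEdge lam mu n i T T') : fOp lam i T' = some T := by
  obtain ⟨D, u, v, A, B, U, hchain, -, hact, hT⟩ := h.exists_chain
  have hcol : fColumn lam i T' = some B := rightmostPlus_reduceWord_eq_some_iff.2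
    ⟨u, v, (signatureOn_restrictTwo _).symm.trans hact.signatureOn_eq,
      hact.left_uncancelled, hact.right_uncancelled⟩
  have hnorm : IsNormOf i (fStart i T' B) (restrictTwo i T) :=
    ⟨hT ▸ hchain.resStep_right, h.source.not_descent i⟩
  rw [fStart] at hnorm
  rw [fOp, hcol, Option.map_some, fStart,
    norm12_eq_of_isNormOf_iff fun _ => hact.isNormOf_fillPure_iff_of_isNormOf hnorm,
    replaceTwo_restrictTwo fun r c => (h.sdiff_eq r c).symm]

theorem twoShape_eq (h : CrystalEdge lam mu n i T T') : twoShape i T = twoShape i T' := by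
  obtain ⟨D, u, v, A, B, U, -, hact, hact', hT⟩ := h.exists_chain
  have hfill := hT ▸ hact.filling.fillPure (c := A) (Or.inr rfl)
  exact Set.ext fun b => hfill.nonempty_iff.trans hact'.filling.nonempty_iff.symm

theorem ircont_eq_add_one (h : CrystalEdge lam mu n i T T') :
    ircont T' i = ircont T i + 1 ∧ ircont T (i + 1) = ircont T' (i + 1) + 1 := by
  obtain ⟨u, v, A, B, hsig, hsig', -⟩ := h.exists_signature
  have hT := (h.source.isTwoFilling i).ircont_add_signCount_signature h.source.lt_rowLen
  have hT' := (h.target.isTwoFilling i).ircont_add_signCount_signature h.target.lt_rowLen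
  rw [← h.twoShape_eq] at hT'
  simp only [hsig, signCount_append, signCount_cons, reduceCtorEq, if_true, if_false] at hT
  simp only [hsig', signCount_append, signCount_cons, reduceCtorEq, if_true, if_false] at hT'
  lia

theorem ircont_eq_of_ne (h : CrystalEdge lam mu n i T T') {x : ℕ} (hx : x ≠ i) (hx' : x ≠ i + 1) :
    ircont T x = ircont T' x :=
  ircont_congr fun r c => by simpa [hx, hx'] using Finset.ext_iff.1 (h.sdiff_eq r c) x

theorem wt_eq (h : CrystalEdge lam mu n i T T') {p q : Set.Icc 1 n} (hp : p.1 = i)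
    (hq : q.1 = i + 1) :
    wtSVRPP n T' = wtSVRPP n T + Pi.single p 1 - Pi.single q 1 := by
  obtain ⟨hlow, hhigh⟩ := h.ircont_eq_add_one
  funext x
  simp only [Pi.add_apply, Pi.sub_apply, Pi.single_apply, Subtype.ext_iff, hp, hq, wtSVRPP]
  by_cases hx : x.1 = i
  · rw [if_pos hx, if_neg (by lia), hx]
    lia
  by_cases hx' : x.1 = i + 1
  · rw [if_neg hx, if_pos hx', hx']
    lia
  · rw [if_neg hx, if_neg hx', h.ircont_eq_of_ne hx hx']
    lia

end CrystalEdge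

theorem eOp_eq_some_iff (hT : IsSVRPP n lam mu T) (h1 : 1 ≤ i) (h2 : i < n) :
    eOp lam i T = some T' ↔ CrystalEdge lam mu n i T T' :=
  ⟨hT.crystalEdge_of_eOp h1 h2, CrystalEdge.eOp_eq⟩

theorem fOp_eq_some_iff (hT' : IsSVRPP n lam mu T') (h1 : 1 ≤ i) (h2 : i < n) :
    fOp lam i T' = some T ↔ CrystalEdge lam mu n i T T' :=
  ⟨hT'.crystalEdge_of_fOp h1 h2, CrystalEdge.fOp_eq⟩

theorem eOp_eq_none_iff :
    eOp lam i T = none ↔ uncancelled .minus (signature (lam.rowLen 0) i T) = 0 := by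
  rw [eOp, Option.map_eq_none_iff, eColumn, leftmostMinus_eq_none_iff, uncancelled]

theorem fOp_eq_none_iff :
    fOp lam i T = none ↔ uncancelled .plus (signature (lam.rowLen 0) i T) = 0 := by
  rw [fOp, Option.map_eq_none_iff, fColumn, rightmostPlus_eq_none_iff, uncancelled]

end Edge

/-- The descent-resolution algorithm used by `e_i` and `f_i` has exactly one outcome, so that these
operators are well defined, and with them `SVRPP^n(lam/mu)` is a seminormal `gl_n`-crystal. -/
theorem svrpp_seminormal (lam mu : YoungDiagram) (hsub : mu ≤ lam) (n : ℕ) (hn : 1 ≤ n) :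
    (∀ T, IsSVRPP n lam mu T → ∀ i, 1 ≤ i → i < n →
      (∀ A, eColumn lam i T = some A → ∃! N, IsNormOf i (eStart i T A) N) ∧
      (∀ A, fColumn lam i T = some A → ∃! N, IsNormOf i (fStart i T A) N)) ∧
    IsSeminormalGLCrystal n {T | IsSVRPP n lam mu T} (wtSVRPP n) (eOp lam) (fOp lam) := by
  refine ⟨fun T hT i _ _ => ⟨fun A => hT.existsUnique_isNormOf_eStart,
    fun A => hT.existsUnique_isNormOf_fStart⟩, ?_⟩
  refine { e_mem := ?_, f_mem := ?_, e_iff_f := ?_, wt_e := ?_, string := ?_ }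
  · exact fun i h1 h2 T hT T' he => ((eOp_eq_some_iff hT h1 h2).1 he).target
  · exact fun i h1 h2 T' hT' T hf => ((fOp_eq_some_iff hT' h1 h2).1 hf).source
  · exact fun i h1 h2 T hT T' hT' =>
      (eOp_eq_some_iff hT h1 h2).trans (fOp_eq_some_iff hT' h1 h2).symm
  · exact fun i h1 h2 T hT T' _ he => ((eOp_eq_some_iff hT h1 h2).1 he).wt_eq rfl rfl
  · intro i h1 h2 T hT
    refine ⟨_, _, isStringLength_of_drop (fun T _ => eOp_eq_none_iff) (fun T hT T' he => ?_) hT,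
      isStringLength_of_drop (fun T _ => fOp_eq_none_iff) (fun T hT T' hf => ?_) hT,
      hT.uncancelled_plus_sub_minus i⟩
    · have hedge := (eOp_eq_some_iff hT h1 h2).1 he
      exact ⟨hedge.target, hedge.uncancelled_minus⟩
    · have hedge := (fOp_eq_some_iff hT h1 h2).1 hf
      exact ⟨hedge.source, hedge.uncancelled_plus⟩
end
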